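/- arXiv:2201.08632 — 4 statements merged into one kernel-verified Lean document; each statement's English description precedes it below -/
import Mathlib

section
/- Let q be a prime power and let ν, m₁, m₂, t be positive integers with ν > m₁ ≥ t+1, ν > m₂ ≥ t+1. Let M ∈ 𝒫_{m₂+1}, let T be a t-dimensional subspace of M, and let j be an integer with t+1 ≤ j ≤ min{m₁, m₂+1}. Then [m₂−t+1 choose j−t]_q · N'(j;m₁;2ν) = Σ_{i=j}^{m₂+1} [i−t choose j−t]_q · |𝒜_i(M,T;m₁)|, where 𝒜_i(M,T;m₁) = {F ∈ 𝒫_{m₁} : T ⊆ F and dim(F ∩ M) = i}. -/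
open Finset Module

noncomputable section

/-- Gaussian binomial coefficient `[n choose k]_q` as a rational number. -/
def gaussBinom (q n k : ℕ) : ℚ :=
  ∏ i ∈ Finset.range k, ((q : ℚ) ^ ((n : ℤ) - i) - 1) / ((q : ℚ) ^ ((k : ℤ) - i) - 1)

/-- `N'(a; m; 2ν)`, the number of `m`-dim totally isotropic subspaces containing
a fixed `a`-dim one. -/
def Nprime (q a m ν : ℕ) : ℚ :=
  ∏ i ∈ Finset.Icc 1 (m - a), ((q : ℚ) ^ (2 * ((ν : ℤ) - m + i)) - 1) / ((q : ℚ) ^ (i : ℤ) - 1)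

variable {K V : Type*} [Field K] [AddCommGroup V] [Module K V]

/-- A subspace is totally isotropic w.r.t. the bilinear form `f`. -/
def TotallyIsotropic (f : V →ₗ[K] V →ₗ[K] K) (W : Submodule K V) : Prop :=
  ∀ x ∈ W, ∀ y ∈ W, f x y = 0

/-- `polar f m` = `𝒫_m`, the set of `m`-dimensional totally isotropic subspaces. -/
def polar (f : V →ₗ[K] V →ₗ[K] K) (m : ℕ) : Set (Submodule K V) :=
  {W | TotallyIsotropic f W ∧ finrank K W = m}

/-- `X` is a `t`-cover of the family `ℱ`. -/
def IsTCover (f : V →ₗ[K] V →ₗ[K] K) (t : ℕ) (ℱ : Set (Submodule K V))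
    (X : Submodule K V) : Prop :=
  TotallyIsotropic f X ∧ ∀ F ∈ ℱ, t ≤ finrank K ↥(X ⊓ F)

/-- `τ_t(ℱ)`, the minimum dimension of a `t`-cover of `ℱ`. -/
def tauCover (f : V →ₗ[K] V →ₗ[K] K) (t : ℕ) (ℱ : Set (Submodule K V)) : ℕ :=
  sInf {x | ∃ X, IsTCover f t ℱ X ∧ finrank K ↥X = x}

def C1 (f : V →ₗ[K] V →ₗ[K] K) (M T : Submodule K V) (m t : ℕ) : Set (Submodule K V) :=
  {F | F ∈ polar f m ∧ T ≤ F ∧ t + 1 ≤ finrank K ↥(F ⊓ M)}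

def C2 (f : V →ₗ[K] V →ₗ[K] K) (M T : Submodule K V) (m : ℕ) : Set (Submodule K V) :=
  {F | F ∈ polar f m ∧ T ≤ F} ∪ {F | F ∈ polar f m ∧ F ≤ M}

def C3 (f : V →ₗ[K] V →ₗ[K] K) (S : Submodule K V) (m : ℕ) : Set (Submodule K V) :=
  {F | F ∈ polar f m ∧ S ≤ F}

def C4 (f : V →ₗ[K] V →ₗ[K] K) (S : Submodule K V) (m t : ℕ) : Set (Submodule K V) :=
  {F | F ∈ polar f m ∧ t ≤ finrank K ↥(F ⊓ S)}

def s0 (q ν m s t : ℕ) : ℚ :=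
  gaussBinom q (s - t) 1 * Nprime q (t + 1) m ν - q * gaussBinom q (s - t) 2 * Nprime q (t + 2) m ν



open Classical in
theorem aux_card {K V : Type*} [Field K] [AddCommGroup V] [Module K V] [Fintype K] [Fintype V]
    (A B : Submodule K V) (h : A ≤ B) :
    ((univ.filter fun v : V => v ∉ A ∧ v ∈ B).card : ℚ) =
      (Fintype.card K : ℚ) ^ finrank K B - (Fintype.card K : ℚ) ^ finrank K A := by
  have e : (univ.filter fun v : V => v ∉ A ∧ v ∈ B) =
      (univ.filter fun v : V => v ∈ B) \ (univ.filter fun v : V => v ∈ A) := by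
    ext v; simp [and_comm]
  have c : ∀ C : Submodule K V, (univ.filter fun v : V => v ∈ C).card =
      Fintype.card K ^ finrank K C := by
    intro C
    rw [← Module.card_eq_pow_finrank (K := K) (V := C), Fintype.card_subtype]
  rw [e, Finset.card_sdiff_of_subset, Nat.cast_sub, c, c]
  · push_cast; rfl
  · apply Finset.card_le_card
    intro v; simp; exact fun hv => h hv
  · intro v; simp; exact fun hv => h hv

open Classical in
theorem aux_count {K V : Type*} [Field K] [AddCommGroup V] [Module K V] [Fintype K] [Fintype V]
    [Fintype (Submodule K V)] (P : Submodule K V → Prop)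
    (hP : ∀ A B, A ≤ B → P B → P A) (m : ℕ) (c : ℕ → ℚ)
    (hc : ∀ A, P A → finrank K A < m →
      ((univ.filter fun v : V => v ∉ A ∧ P (A ⊔ Submodule.span K {v})).card : ℚ) =
        c (finrank K A)) (d : ℕ) :
    ∀ A, P A → finrank K A + d = m →
      ((univ.filter fun F : Submodule K V => A ≤ F ∧ P F ∧ finrank K F = m).card : ℚ) =
        ∏ i ∈ range d, c (m - 1 - i) /
          ((Fintype.card K : ℚ) ^ m - (Fintype.card K : ℚ) ^ (m - 1 - i)) := by
  induction d with
  | zero =>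
    intro A hA hd
    have : (univ.filter fun F : Submodule K V => A ≤ F ∧ P F ∧ finrank K F = m) = {A} := by
      ext F
      simp only [mem_filter, mem_univ, true_and, mem_singleton]
      constructor
      · rintro ⟨h1, -, h3⟩
        exact (Submodule.eq_of_le_of_finrank_eq h1 (by omega)).symm
      · rintro rfl
        exact ⟨le_rfl, hA, by omega⟩
    rw [this]; simp
  | succ d ih =>
    intro A hA hd
    have hq : (1 : ℚ) < Fintype.card K := by exact_mod_cast Fintype.one_lt_card
    have key := Finset.sum_card_bipartiteAbove_eq_sum_card_bipartiteBelow
      (s := univ.filter fun v : V => v ∉ A ∧ P (A ⊔ Submodule.span K {v}))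
      (t := univ.filter fun F : Submodule K V => A ≤ F ∧ P F ∧ finrank K F = m)
      (fun v F => v ∈ F)
    have key2 : (∑ v ∈ univ.filter fun v : V => v ∉ A ∧ P (A ⊔ Submodule.span K {v}),
        (((univ.filter fun F : Submodule K V => A ≤ F ∧ P F ∧ finrank K F = m).bipartiteAbove
          (fun v F => v ∈ F) v).card : ℚ)) =
        ∑ F ∈ univ.filter fun F : Submodule K V => A ≤ F ∧ P F ∧ finrank K F = m,
        (((univ.filter fun v : V => v ∉ A ∧ P (A ⊔ Submodule.span K {v})).bipartiteBelow
          (fun v F => v ∈ F) F).card : ℚ) := by exact_mod_cast key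
    rw [Finset.sum_congr rfl (g := fun _ => ∏ i ∈ range d, c (m - 1 - i) /
          ((Fintype.card K : ℚ) ^ m - (Fintype.card K : ℚ) ^ (m - 1 - i))),
      Finset.sum_congr (s₁ := univ.filter fun F : Submodule K V => A ≤ F ∧ P F ∧ finrank K F = m)
        rfl (g := fun _ => (Fintype.card K : ℚ) ^ m - (Fintype.card K : ℚ) ^ (finrank K A)),
      Finset.sum_const, Finset.sum_const, nsmul_eq_mul, nsmul_eq_mul, hc A hA (by omega)] at key2
    · have e : m - 1 - d = finrank K A := by omega
      have : (Fintype.card K : ℚ) ^ (finrank K A) < (Fintype.card K : ℚ) ^ m :=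
        pow_lt_pow_right₀ hq (by omega)
      rw [Finset.prod_range_succ, e, ← mul_div_assoc, eq_div_iff (by linarith), ← key2]
      ring
    · intro F hF
      simp only [mem_filter, mem_univ, true_and] at hF
      rw [← hF.2.2, ← aux_card A F hF.1]
      congr 2
      ext v
      simp only [bipartiteBelow, mem_filter, mem_univ, true_and]
      constructor
      · rintro ⟨⟨h1, -⟩, h2⟩; exact ⟨h1, h2⟩
      · rintro ⟨h1, h2⟩
        refine ⟨⟨h1, hP _ F ?_ hF.2.1⟩, h2⟩
        exact sup_le hF.1 (by simpa using h2)
    · intro v hv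
      simp only [mem_filter, mem_univ, true_and] at hv
      rw [← ih _ hv.2 (by rw [Submodule.finrank_sup_span_singleton hv.1]; omega)]
      congr 2
      ext F
      simp only [bipartiteAbove, mem_filter, mem_univ, true_and, sup_le_iff,
        Submodule.span_singleton_le_iff_mem]
      tauto

open Classical in
theorem aux_gauss {K V : Type*} [Field K] [AddCommGroup V] [Module K V] [Fintype K] [Fintype V]
    [Fintype (Submodule K V)] (T W : Submodule K V) (h : T ≤ W) (j : ℕ) (hj : finrank K T ≤ j) :
    ((univ.filter fun F : Submodule K V => T ≤ F ∧ F ≤ W ∧ finrank K F = j).card : ℚ) =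
      gaussBinom (Fintype.card K) (finrank K W - finrank K T) (j - finrank K T) := by
  have hq : (1 : ℚ) < Fintype.card K := by exact_mod_cast Fintype.one_lt_card
  have hTW : finrank K T ≤ finrank K W := Submodule.finrank_mono h
  rw [aux_count (fun F => F ≤ W) (fun A B h1 h2 => h1.trans h2) j
    (fun a => (Fintype.card K : ℚ) ^ finrank K W - (Fintype.card K : ℚ) ^ a) ?_
    (j - finrank K T) T h (by omega), gaussBinom, ← Finset.prod_range_reflect]
  · apply Finset.prod_congr rfl
    intro i hi
    rw [Finset.mem_range] at hi
    have e : j - 1 - (j - finrank K T - 1 - i) = finrank K T + i := by omega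
    rw [e]
    have h0 : (Fintype.card K : ℚ) ≠ 0 := by linarith
    have h1 : ((Fintype.card K : ℚ) ^ (finrank K T + i)) ≠ 0 := pow_ne_zero _ h0
    symm
    rw [← mul_div_mul_left _ _ h1]
    have f : ∀ w : ℕ, finrank K T ≤ w → (Fintype.card K : ℚ) ^ (finrank K T + i) *
        ((Fintype.card K : ℚ) ^ (((w - finrank K T : ℕ) : ℤ) - i) - 1) =
        (Fintype.card K : ℚ) ^ w - (Fintype.card K : ℚ) ^ (finrank K T + i) := by
      intro w hw
      rw [mul_sub, mul_one, ← zpow_natCast, ← zpow_add₀ h0, ← zpow_natCast _ w]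
      congr 2
      push_cast [hw]; ring
    rw [f _ hTW, f _ hj]
  · intro A hA hAj
    rw [← aux_card A W hA]
    congr 2
    ext v
    simp only [mem_filter, mem_univ, true_and, sup_le_iff,
        Submodule.span_singleton_le_iff_mem]
    tauto

open Classical in
theorem aux_polar {K V : Type*} [Field K] [AddCommGroup V] [Module K V] [Fintype K] [Fintype V]
    [Fintype (Submodule K V)] (ν : ℕ) (hV : finrank K V = 2 * ν)
    (f : V →ₗ[K] V →ₗ[K] K) (halt : ∀ v, f v v = 0)
    (hnd : ∀ v, (∀ w, f v w = 0) → v = 0)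
    (R : Submodule K V) (hR : TotallyIsotropic f R) (m : ℕ) (hm : finrank K R ≤ m)
    (hmν : m ≤ ν) :
    ((univ.filter fun F : Submodule K V => R ≤ F ∧ TotallyIsotropic f F ∧ finrank K F = m).card : ℚ)
      = Nprime (Fintype.card K) (finrank K R) m ν := by
  have hq : (1 : ℚ) < Fintype.card K := by exact_mod_cast Fintype.one_lt_card
  have hrefl : LinearMap.IsRefl f := LinearMap.IsAlt.isRefl halt
  have hnd' : LinearMap.BilinForm.Nondegenerate f :=
    ⟨hnd, fun v hv => hnd v fun w => hrefl _ _ (hv w)⟩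
  rw [aux_count (fun F => TotallyIsotropic f F)
    (fun A B h1 h2 x hx y hy => h2 x (h1 hx) y (h1 hy)) m
    (fun a => (Fintype.card K : ℚ) ^ (2 * ν - a) - (Fintype.card K : ℚ) ^ a) ?_
    (m - finrank K R) R hR (by omega), Nprime]
  · have h0 : (Fintype.card K : ℚ) ≠ 0 := by linarith
    refine Finset.prod_nbij (· + 1) ?_ ?_ ?_ ?_
    · intro i hi
      simp only [Finset.mem_range, Finset.mem_Icc] at hi ⊢
      omega
    · intro a _ b _ hab
      simpa using hab
    · intro i hi
      simp only [Finset.coe_Icc, Set.mem_Icc] at hi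
      exact ⟨i - 1, by simp only [Finset.coe_range, Set.mem_Iio]; omega, by simp only; omega⟩
    · intro i hi
      rw [Finset.mem_range] at hi
      have h1 : ((Fintype.card K : ℚ) ^ (m - 1 - i)) ≠ 0 := pow_ne_zero _ h0
      have g : ∀ (w : ℕ) (z : ℤ), ((m - 1 - i : ℕ) : ℤ) + z = w →
          (Fintype.card K : ℚ) ^ (m - 1 - i) * ((Fintype.card K : ℚ) ^ z - 1) =
          (Fintype.card K : ℚ) ^ w - (Fintype.card K : ℚ) ^ (m - 1 - i) := by
        intro w z hw
        rw [mul_sub, mul_one, ← zpow_natCast, ← zpow_add₀ h0, ← zpow_natCast _ w, hw]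
      symm
      rw [← mul_div_mul_left _ _ h1, g (2 * ν - (m - 1 - i)) _ (by omega), g m _ (by omega)]
  · intro A hA hAj
    have hAo : A ≤ LinearMap.BilinForm.orthogonal f A := fun x hx y hy => hA y hy x hx
    have hf := LinearMap.BilinForm.finrank_orthogonal hnd' A
    rw [hV] at hf
    rw [← hf, ← aux_card A _ hAo]
    congr 2
    ext v
    simp only [mem_filter, mem_univ, true_and]
    refine and_congr_right fun hv => ?_
    constructor
    · intro h n hn
      exact h n (Submodule.mem_sup_left hn) v
        (Submodule.mem_sup_right (Submodule.mem_span_singleton_self v))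
    · intro h x hx y hy
      obtain ⟨a, ha, b, hb, rfl⟩ := Submodule.mem_sup.1 hx
      obtain ⟨a', ha', b', hb', rfl⟩ := Submodule.mem_sup.1 hy
      obtain ⟨r, rfl⟩ := Submodule.mem_span_singleton.1 hb
      obtain ⟨s, rfl⟩ := Submodule.mem_span_singleton.1 hb'
      have h1 : f a v = 0 := h a ha
      have h2 : f v a' = 0 := hrefl _ _ (h a' ha')
      simp [hA a ha a' ha', h1, h2, halt]

theorem stmt_12
    (q ν m₁ m₂ t j : ℕ) (hq : IsPrimePow q)
    {K : Type} [Field K] [Fintype K] (hK : Fintype.card K = q)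
    (f : (Fin (2 * ν) → K) →ₗ[K] (Fin (2 * ν) → K) →ₗ[K] K)
    (halt : ∀ v, f v v = 0)
    (hnd : ∀ v, (∀ w, f v w = 0) → v = 0)
    (ht : 0 < t) (hm₁ : t + 1 ≤ m₁) (hm₂ : t + 1 ≤ m₂) (hm₁ν : m₁ < ν) (hm₂ν : m₂ < ν)
    (M : Submodule K (Fin (2 * ν) → K)) (hM : M ∈ polar f (m₂ + 1))
    (T : Submodule K (Fin (2 * ν) → K)) (hTM : T ≤ M) (hT : finrank K T = t)
    (hj₁ : t + 1 ≤ j) (hj₂ : j ≤ min m₁ (m₂ + 1)) :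
    gaussBinom q (m₂ - t + 1) (j - t) * Nprime q j m₁ ν =
      ∑ i ∈ Finset.Icc j (m₂ + 1), gaussBinom q (i - t) (j - t) *
        ({F | F ∈ polar f m₁ ∧ T ≤ F ∧ finrank K ↥(F ⊓ M) = i}.ncard : ℚ) := by
  classical
  obtain ⟨hMi, hMr⟩ := hM
  have : Fintype (Submodule K (Fin (2 * ν) → K)) := Fintype.ofFinite _
  subst hK
  have hj₃ : j ≤ m₁ := hj₂.trans (min_le_left _ _)
  have hj₄ : j ≤ m₂ + 1 := hj₂.trans (min_le_right _ _)
  have key := Finset.sum_card_bipartiteAbove_eq_sum_card_bipartiteBelow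
    (s := univ.filter fun R : Submodule K (Fin (2 * ν) → K) => T ≤ R ∧ R ≤ M ∧ finrank K R = j)
    (t := univ.filter fun F : Submodule K (Fin (2 * ν) → K) =>
      F ∈ polar f m₁ ∧ T ≤ F)
    (fun R F => R ≤ F)
  have key2 := congrArg (Nat.cast : ℕ → ℚ) key
  rw [Nat.cast_sum, Nat.cast_sum] at key2
  rw [Finset.sum_congr rfl (g := fun _ => Nprime (Fintype.card K) j m₁ ν),
    Finset.sum_const, nsmul_eq_mul, aux_gauss T M hTM j (by omega), hMr, hT] at key2
  · rw [show m₂ - t + 1 = m₂ + 1 - t by omega, key2]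
    have hg : ∀ F ∈ univ.filter fun F : Submodule K (Fin (2 * ν) → K) => F ∈ polar f m₁ ∧ T ≤ F,
        (((univ.filter fun R : Submodule K (Fin (2 * ν) → K) =>
          T ≤ R ∧ R ≤ M ∧ finrank K R = j).bipartiteBelow (fun R F => R ≤ F) F).card : ℚ) =
        ∑ i ∈ Finset.Icc j (m₂ + 1), gaussBinom (Fintype.card K) (i - t) (j - t) *
          (if finrank K ↥(F ⊓ M) = i then 1 else 0) := by
      intro F hF
      simp only [mem_filter, mem_univ, true_and] at hF
      have e : ((univ.filter fun R : Submodule K (Fin (2 * ν) → K) =>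
          T ≤ R ∧ R ≤ M ∧ finrank K R = j).bipartiteBelow (fun R F => R ≤ F) F) =
          univ.filter fun R : Submodule K (Fin (2 * ν) → K) =>
          T ≤ R ∧ R ≤ F ⊓ M ∧ finrank K R = j := by
        ext R
        simp only [bipartiteBelow, mem_filter, mem_univ, true_and, le_inf_iff]
        tauto
      rw [e]
      have hle : finrank K ↥(F ⊓ M) ≤ m₂ + 1 := hMr ▸ Submodule.finrank_mono inf_le_right
      simp only [mul_ite, mul_one, mul_zero]
      rw [Finset.sum_ite_eq]
      split_ifs with hi
      · rw [aux_gauss T (F ⊓ M) (le_inf hF.2 hTM) j (by omega), hT]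
      · rw [Nat.cast_eq_zero, Finset.card_eq_zero, Finset.filter_eq_empty_iff]
        rintro R - ⟨-, h2, h3⟩
        have := Submodule.finrank_mono h2
        exact hi (Finset.mem_Icc.2 ⟨by omega, hle⟩)
    rw [Finset.sum_congr rfl hg, Finset.sum_comm]
    apply Finset.sum_congr rfl
    intro i _
    rw [← Finset.mul_sum, Finset.sum_boole, Finset.filter_filter]
    congr 2
    rw [Set.ncard_eq_toFinset_card']
    congr 1
    ext F
    simp [and_assoc]
    tauto
  · intro R hR
    simp only [mem_filter, mem_univ, true_and] at hR
    rw [← hR.2.2, ← aux_polar ν (by simp) f halt hnd R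
      (fun x hx y hy => hMi x (hR.2.1 hx) y (hR.2.1 hy)) m₁ (by omega) (by omega)]
    congr 2
    ext F
    simp only [bipartiteAbove, mem_filter, mem_univ, true_and]
    simp only [polar, Set.mem_ofPred_eq]
    constructor
    · tauto
    · rintro ⟨h1, h2⟩; exact ⟨⟨h2, hR.1.trans h1⟩, h1⟩

end
end

section
/- Let q be a prime power and let ν, m₁, m₂, t be positive integers with ν > m₁ ≥ t+1 and ν > m₂ ≥ t+1. Then for every M ∈ 𝒫_{m₂+1} and every t-dimensional subspace T of M, |𝒞₁(M,T;m₁,t)|·|𝒞₂(M,T;m₂)| > s₀(ν,m₁,m₂+1,t)·N'(t;m₂;2ν), where s₀(ν,m,s,t) = [s−t choose 1]_q·N'(t+1;m;2ν) − q·[s−t choose 2]_q·N'(t+2;m;2ν). -/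
open Finset Module

noncomputable section

variable {K V : Type*} [Field K] [AddCommGroup V] [Module K V]

namespace Aux13
open Classical
set_option linter.unusedSectionVars false

variable {K V : Type*} [Field K] [Fintype K] [AddCommGroup V] [Module K V] [Finite V]

instance : Fintype (Submodule K V) := Fintype.ofFinite _

def pts (T U : Submodule K V) : Finset (Submodule K V) :=
  Finset.univ.filter (fun W => T ≤ W ∧ W ≤ U ∧ finrank K W = finrank K T + 1)

lemma card_sub [Fintype V] (U : Submodule K V) :
    (Finset.univ.filter (fun v : V => v ∈ U)).card = Fintype.card K ^ finrank K U := by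
  rw [← Module.card_eq_pow_finrank (K := K) (V := U), Fintype.card_subtype]

lemma card_diff [Fintype V] (T U : Submodule K V) (h : T ≤ U) :
    (Finset.univ.filter (fun v : V => v ∈ U ∧ v ∉ T)).card
      = Fintype.card K ^ finrank K U - Fintype.card K ^ finrank K T := by
  rw [← card_sub U, ← card_sub T, ← Finset.card_sdiff_of_subset]
  · congr 1; ext v; simp
  · intro v; simp; exact fun hv => h hv

lemma sup_span_eq (T W : Submodule K V) (h : T ≤ W) (hr : finrank K W = finrank K T + 1)
    (v : V) (hv : v ∈ W) (hvT : v ∉ T) : T ⊔ Submodule.span K {v} = W := by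
  have hle : T ⊔ Submodule.span K {v} ≤ W :=
    sup_le h (by rwa [Submodule.span_singleton_le_iff_mem])
  apply Submodule.eq_of_le_of_finrank_le hle
  have : T < T ⊔ Submodule.span K {v} := by
    refine lt_of_le_of_ne le_sup_left ?_
    intro e
    apply hvT
    rw [e]
    exact Submodule.mem_sup_right (Submodule.mem_span_singleton_self v)
  have := Submodule.finrank_lt_finrank_of_lt this
  omega

lemma finrank_sup_span (T : Submodule K V) (v : V) (hvT : v ∉ T) :
    finrank K ↥(T ⊔ Submodule.span K {v}) = finrank K T + 1 := by
  have h1 := Submodule.finrank_sup_add_finrank_inf_eq T (Submodule.span K {v})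
  have hv : v ≠ 0 := by rintro rfl; exact hvT T.zero_mem
  rw [finrank_span_singleton hv] at h1
  have : T < T ⊔ Submodule.span K {v} := by
    refine lt_of_le_of_ne le_sup_left ?_
    intro e
    apply hvT
    rw [e]
    exact Submodule.mem_sup_right (Submodule.mem_span_singleton_self v)
  have := Submodule.finrank_lt_finrank_of_lt this
  omega

lemma card_pts (T U : Submodule K V) (h : T ≤ U) (j : ℕ) (hj : finrank K U = finrank K T + j) :
    ((pts T U).card : ℚ) * ((Fintype.card K : ℚ) - 1) = (Fintype.card K : ℚ) ^ j - 1 := by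
  have : Fintype V := Fintype.ofFinite V
  have key := Finset.card_eq_sum_card_fiberwise
    (s := Finset.univ.filter (fun v : V => v ∈ U ∧ v ∉ T)) (t := pts T U)
    (f := fun v => T ⊔ Submodule.span K {v}) (by
      intro v hv
      simp only [Finset.coe_filter, Finset.mem_univ, true_and, Set.mem_ofPred_eq] at hv
      simp only [pts, Finset.coe_filter, Finset.mem_univ, true_and, Set.mem_ofPred_eq]
      exact ⟨le_sup_left, sup_le h (by rw [Submodule.span_singleton_le_iff_mem]; exact hv.1),
        finrank_sup_span T v hv.2⟩)
  have h2 : ∀ W ∈ pts T U, ((Finset.univ.filter (fun v : V => v ∈ U ∧ v ∉ T)).filter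
      (fun v => T ⊔ Submodule.span K {v} = W)).card
      = Fintype.card K ^ (finrank K T + 1) - Fintype.card K ^ finrank K T := by
    intro W hW
    simp only [pts, Finset.mem_filter, Finset.mem_univ, true_and] at hW
    rw [← hW.2.2, ← card_diff T W hW.1]
    congr 1
    ext v
    simp only [Finset.mem_filter, Finset.mem_univ, true_and]
    constructor
    · rintro ⟨⟨a, b⟩, rfl⟩
      exact ⟨Submodule.mem_sup_right (Submodule.mem_span_singleton_self v), b⟩
    · rintro ⟨a, b⟩
      exact ⟨⟨hW.2.1 a, b⟩, sup_span_eq T W hW.1 hW.2.2 v a b⟩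
  rw [Finset.sum_congr rfl h2, card_diff T U h, Finset.sum_const, smul_eq_mul, hj] at key
  have hq : 0 < Fintype.card K := Fintype.card_pos
  have key2 : ((Fintype.card K ^ (finrank K T + j) - Fintype.card K ^ finrank K T : ℕ) : ℚ)
    = (((pts T U).card * (Fintype.card K ^ (finrank K T + 1) - Fintype.card K ^ finrank K T) : ℕ) : ℚ) := by
    rw [key]
  rw [Nat.cast_mul, Nat.cast_sub (Nat.pow_le_pow_right hq (by omega)),
    Nat.cast_sub (Nat.pow_le_pow_right hq (by omega))] at key2
  push_cast at key2
  have hq' : (0:ℚ) < (Fintype.card K : ℚ) ^ finrank K T := by positivity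
  apply mul_left_cancel₀ hq'.ne'
  rw [pow_add, pow_add] at key2
  linarith

/-- isotropic subspaces above `A`. -/
def up (f : V →ₗ[K] V →ₗ[K] K) (m : ℕ) (A : Submodule K V) : Finset (Submodule K V) :=
  Finset.univ.filter (fun F => F ∈ polar f m ∧ A ≤ F)

lemma mem_up (f : V →ₗ[K] V →ₗ[K] K) (m : ℕ) (A F : Submodule K V) :
    F ∈ up f m A ↔ (TotallyIsotropic f F ∧ finrank K F = m) ∧ A ≤ F := by
  simp only [up, Finset.mem_filter, Finset.mem_univ, true_and]
  rfl

lemma mem_pts (T U W : Submodule K V) :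
    W ∈ pts T U ↔ T ≤ W ∧ W ≤ U ∧ finrank K W = finrank K T + 1 := by
  simp only [pts, Finset.mem_filter, Finset.mem_univ, true_and]

lemma card_up (ν : ℕ) (f : V →ₗ[K] V →ₗ[K] K) (hV : finrank K V = 2 * ν)
    (halt : ∀ v, f v v = 0) (hnd : ∀ v, (∀ w, f v w = 0) → v = 0) (k : ℕ) :
    ∀ A : Submodule K V, TotallyIsotropic f A → finrank K A + k ≤ ν →
    ((up f (finrank K A + k) A).card : ℚ) =
      Nprime (Fintype.card K) (finrank K A) (finrank K A + k) ν := by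
  induction k with
  | zero =>
    intro A hA hk
    have : up f (finrank K A + 0) A = {A} := by
      ext F
      rw [mem_up, Finset.mem_singleton]
      constructor
      · rintro ⟨⟨_, h⟩, h'⟩
        exact (Submodule.eq_of_le_of_finrank_eq h' h.symm).symm
      · rintro rfl
        exact ⟨⟨hA, rfl⟩, le_rfl⟩
    rw [this]
    simp [Nprime]
  | succ k ih =>
    intro A hA hk
    set a := finrank K A with ha
    set q := Fintype.card K with hq
    have hq1 : (1:ℚ) < q := by exact_mod_cast Fintype.one_lt_card
    have hneg : ∀ x y, f x y = - f y x := by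
      intro x y
      have := halt (x + y)
      simp only [map_add, LinearMap.add_apply, halt, zero_add, add_zero] at this
      exact eq_neg_of_add_eq_zero_left (by rw [add_comm]; exact this)
    -- the orthogonal complement
    let O : Submodule K V := LinearMap.BilinForm.orthogonal f A
    have hO : ∀ v, v ∈ O ↔ ∀ x ∈ A, f x v = 0 := by
      intro v; exact LinearMap.BilinForm.mem_orthogonal_iff
    have hrefl : LinearMap.IsRefl f := by
      intro x y h; rw [hneg, h, neg_zero]
    have hfr : finrank K O = 2 * ν - a := by
      rw [← hV, ha]
      apply LinearMap.BilinForm.finrank_orthogonal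
      refine ⟨hnd, fun v hv => hnd v (fun w => ?_)⟩
      rw [hneg, hv w, neg_zero]
    have hAO : A ≤ O := fun v hv => (hO v).2 (fun x hx => hA x hx v hv)
    have hB : ∀ B, A ≤ B → finrank K B = a + 1 → (TotallyIsotropic f B ↔ B ≤ O) := by
      intro B hAB hBr
      constructor
      · intro h v hv
        exact (hO v).2 (fun x hx => h x (hAB hx) v hv)
      · intro h
        obtain ⟨v, hv, hvA⟩ : ∃ v ∈ B, v ∉ A := by
          by_contra! hc
          have : B ≤ A := hc
          have := Submodule.finrank_mono this
          omega
        have hs := sup_span_eq A B hAB hBr v hv hvA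
        intro x hx y hy
        rw [← hs, Submodule.mem_sup] at hx hy
        obtain ⟨x1, hx1, x2, hx2, rfl⟩ := hx
        obtain ⟨y1, hy1, y2, hy2, rfl⟩ := hy
        obtain ⟨c, rfl⟩ := Submodule.mem_span_singleton.1 hx2
        obtain ⟨d, rfl⟩ := Submodule.mem_span_singleton.1 hy2
        have e1 := hA x1 hx1 y1 hy1
        have e2 := (hO v).1 (h hv) x1 hx1
        have e3 := (hO v).1 (h hv) y1 hy1
        have e4 : f v y1 = 0 := by rw [hneg, e3, neg_zero]
        simp [e1, e2, e4, halt]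
    have dc := Finset.sum_card_bipartiteAbove_eq_sum_card_bipartiteBelow
      (s := pts A O) (t := up f (a + (k + 1)) A) (fun B F => B ≤ F)
    have h1 : ∀ B ∈ pts A O, (((Finset.bipartiteAbove (fun B F => B ≤ F) (up f (a + (k + 1)) A) B).card : ℕ) : ℚ)
        = Nprime q (a + 1) (a + (k + 1)) ν := by
      intro B hBm
      simp only [pts, Finset.mem_filter, Finset.mem_univ, true_and] at hBm
      have := ih B ((hB B hBm.1 hBm.2.2).2 hBm.2.1) (by omega)
      rw [hBm.2.2, ← ha, show a + 1 + k = a + (k + 1) by ring] at this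
      rw [← this]
      congr 2
      ext F
      simp only [Finset.bipartiteAbove, up, Finset.mem_filter, Finset.mem_univ, true_and]
      constructor
      · tauto
      · rintro ⟨h, h'⟩; exact ⟨⟨h, hBm.1.trans h'⟩, h'⟩
    have h2 : ∀ F ∈ up f (a + (k + 1)) A, (((Finset.bipartiteBelow (fun B F => B ≤ F) (pts A O) F).card : ℕ) : ℚ)
        = ((q:ℚ) ^ (k + 1) - 1) / (q - 1) := by
      intro F hF
      rw [mem_up] at hF
      rw [← card_pts A F hF.2 (k + 1) hF.1.2, mul_div_cancel_right₀ _ (by linarith)]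
      congr 2
      ext B
      simp only [Finset.bipartiteBelow, pts, Finset.mem_filter, Finset.mem_univ, true_and]
      constructor
      · tauto
      · rintro ⟨h, h', h''⟩
        exact ⟨⟨h, (hB B h h'').1 (fun x hx y hy => hF.1.1 x (h' hx) y (h' hy)), h''⟩, h'⟩
    have dc' := congrArg (Nat.cast : ℕ → ℚ) dc
    push_cast at dc'
    rw [Finset.sum_congr rfl h1, Finset.sum_congr rfl h2, Finset.sum_const, Finset.sum_const,
      nsmul_eq_mul, nsmul_eq_mul] at dc'
    have hp := card_pts A O hAO (2 * (ν - a)) (by omega)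
    have hqk : (q:ℚ) ^ (k + 1) - 1 ≠ 0 := by
      have := one_lt_pow₀ hq1 (Nat.succ_ne_zero k)
      exact (sub_pos.2 this).ne'
    have hN : Nprime q a (a + (k + 1)) ν =
        Nprime q (a + 1) (a + (k + 1)) ν * (((q:ℚ) ^ (2 * (ν - a)) - 1) / ((q:ℚ) ^ (k + 1) - 1)) := by
      unfold Nprime
      rw [show a + (k + 1) - a = k + 1 by omega, show a + (k + 1) - (a + 1) = k by omega,
        Finset.prod_Icc_succ_top (by omega)]
      congr 2
      · rw [← zpow_natCast]
        congr 2
        push_cast [Nat.cast_sub (show a ≤ ν by omega)]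
        ring
    rw [hN, ← hp]
    have : (q:ℚ) - 1 ≠ 0 := by linarith
    field_simp at dc' ⊢
    linarith

lemma Nprime_pos (q a m ν : ℕ) (hq : 1 < q) (h : m ≤ ν) : 0 < Nprime q a m ν := by
  unfold Nprime
  apply Finset.prod_pos
  intro i hi
  rw [Finset.mem_Icc] at hi
  have hq' : (1:ℚ) < q := by exact_mod_cast hq
  apply div_pos <;> rw [sub_pos] <;> apply one_lt_zpow₀ hq' <;> omega

/-- uniform version of the count. -/
lemma card_up' (ν : ℕ) (f : V →ₗ[K] V →ₗ[K] K) (hV : finrank K V = 2 * ν)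
    (halt : ∀ v, f v v = 0) (hnd : ∀ v, (∀ w, f v w = 0) → v = 0)
    (A : Submodule K V) (hA : TotallyIsotropic f A) (a m : ℕ) (ha : finrank K A = a) (ham : a ≤ m)
    (hm : m ≤ ν) : ((up f m A).card : ℚ) = Nprime (Fintype.card K) a m ν := by
  obtain ⟨k, rfl⟩ := Nat.exists_eq_add_of_le ham
  subst ha
  exact card_up ν f hV halt hnd k A hA hm

lemma card_up_le (ν : ℕ) (f : V →ₗ[K] V →ₗ[K] K) (hV : finrank K V = 2 * ν)
    (halt : ∀ v, f v v = 0) (hnd : ∀ v, (∀ w, f v w = 0) → v = 0)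
    (A : Submodule K V) (hA : TotallyIsotropic f A) (a m : ℕ) (ha : finrank K A = a)
    (hm : m ≤ ν) : ((up f m A).card : ℚ) ≤ Nprime (Fintype.card K) a m ν := by
  by_cases h : a ≤ m
  · exact (card_up' ν f hV halt hnd A hA a m ha h hm).le
  · have : up f m A = ∅ := by
      ext F
      rw [mem_up]
      simp only [Finset.notMem_empty, iff_false]
      rintro ⟨⟨_, h1⟩, h2⟩
      have := Submodule.finrank_mono h2
      omega
    rw [this, Finset.card_empty, Nat.cast_zero]
    exact (Nprime_pos _ _ _ _ Fintype.one_lt_card hm).le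

lemma pts_inf (T M F : Submodule K V) :
    pts T (F ⊓ M) = (pts T M).filter (fun X => X ≤ F) := by
  ext X
  rw [Finset.mem_filter, mem_pts, mem_pts, le_inf_iff]
  tauto

lemma finrank_sup_pts (T M X Y : Submodule K V) (hX : X ∈ pts T M) (hY : Y ∈ pts T M)
    (h : X ≠ Y) : finrank K ↥(X ⊔ Y) = finrank K T + 2 := by
  rw [mem_pts] at hX hY
  have h1 := Submodule.finrank_sup_add_finrank_inf_eq X Y
  have h2 := Submodule.finrank_mono (le_inf hX.1 hY.1)
  have h3 : X ⊓ Y < X := by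
    refine lt_of_le_of_ne inf_le_left (fun e => h ?_)
    exact Submodule.eq_of_le_of_finrank_eq (inf_eq_left.1 e) (by omega)
  have := Submodule.finrank_lt_finrank_of_lt h3
  omega

/-- pointwise inequality. -/
lemma ptwise (T U : Submodule K V) (h : T ≤ U) :
    ((pts T U).card : ℚ) - (pts T U).offDiag.card / ((Fintype.card K : ℚ) + 1)
      ≤ if finrank K T + 1 ≤ finrank K U then 1 else 0 := by
  set q := Fintype.card K
  have hq1 : (1:ℚ) < q := by exact_mod_cast Fintype.one_lt_card
  obtain ⟨j, hj⟩ := Nat.exists_eq_add_of_le (Submodule.finrank_mono h)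
  have hc := card_pts T U h j hj
  set x := (pts T U).card with hx
  have hoff : ((pts T U).offDiag.card : ℚ) = x * (x - 1) := by
    rw [Finset.offDiag_card, Nat.cast_sub (Nat.le_mul_self _)]
    push_cast
    ring
  rw [hoff]
  change (x:ℚ) * (q - 1) = (q:ℚ) ^ j - 1 at hc
  rcases Nat.eq_zero_or_pos j with rfl | hj0
  · have : (x:ℚ) = 0 := by
      rw [pow_zero, sub_self] at hc
      rcases mul_eq_zero.1 hc with h | h
      · exact h
      · linarith
    rw [this, if_neg (by omega)]
    simp
  · rw [if_pos (by omega)]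
    have hx' : (x:ℚ) = 1 ∨ (q:ℚ) + 1 ≤ x := by
      rcases Nat.lt_or_ge 1 j with h2 | h2
      · right
        have : (q:ℚ) ^ 2 ≤ (q:ℚ) ^ j := pow_le_pow_right₀ hq1.le h2
        have h3 : ((q:ℚ) + 1) * (q - 1) ≤ x * (q - 1) := by rw [hc]; nlinarith
        exact le_of_mul_le_mul_right h3 (by linarith)
      · left
        have : j = 1 := by omega
        subst this
        rw [pow_one] at hc
        exact mul_right_cancel₀ (b := (q:ℚ) - 1) (by linarith) (by linarith)
    have h4 : ((x:ℚ) - 1) * (q + 1 - x) ≤ 0 := by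
      rcases hx' with h | h
      · rw [h]; simp
      · exact mul_nonpos_of_nonneg_of_nonpos (by linarith) (by linarith)
    rw [tsub_le_iff_right, ← sub_le_iff_le_add', le_div_iff₀ (by linarith)]
    nlinarith

lemma s0_le (ν m t s : ℕ) (f : V →ₗ[K] V →ₗ[K] K) (hV : finrank K V = 2 * ν)
    (halt : ∀ v, f v v = 0) (hnd : ∀ v, (∀ w, f v w = 0) → v = 0)
    (hm : t + 1 ≤ m) (hmν : m ≤ ν) (hs : t + 2 ≤ s)
    (M : Submodule K V) (hM : TotallyIsotropic f M) (hMs : finrank K M = s)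
    (T : Submodule K V) (hTM : T ≤ M) (hT : finrank K T = t) :
    s0 (Fintype.card K) ν m s t ≤
      (((up f m T).filter (fun F => t + 1 ≤ finrank K ↥(F ⊓ M))).card : ℚ) := by
  have hiso : ∀ X, X ≤ M → TotallyIsotropic f X := fun X h x hx y hy => hM x (h hx) y (h hy)
  have hq1 : (1:ℚ) < Fintype.card K := by exact_mod_cast Fintype.one_lt_card
  set N1 := Nprime (Fintype.card K) (t + 1) m ν with hN1
  set N2 := Nprime (Fintype.card K) (t + 2) m ν with hN2
  have hn := card_pts T M hTM (s - t) (by omega)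
  set n := (pts T M).card with hnn
  have d1 : ∑ F ∈ up f m T, ((pts T (F ⊓ M)).card : ℚ) = n * N1 := by
    have dc := congrArg (Nat.cast : ℕ → ℚ) (Finset.sum_card_bipartiteAbove_eq_sum_card_bipartiteBelow
      (s := pts T M) (t := up f m T) (fun X F => X ≤ F))
    push_cast at dc
    have h1 : ∀ X ∈ pts T M, (((up f m T).bipartiteAbove (fun X F => X ≤ F) X).card : ℚ) = N1 := by
      intro X hX
      rw [mem_pts] at hX
      rw [hN1, ← card_up' ν f hV halt hnd X (hiso X hX.2.1) (t + 1) m (by omega) hm hmν]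
      congr 2
      ext F
      rw [Finset.bipartiteAbove, Finset.mem_filter, mem_up, mem_up]
      constructor
      · tauto
      · rintro ⟨h, h'⟩; exact ⟨⟨h, hX.1.trans h'⟩, h'⟩
    rw [Finset.sum_congr rfl h1, Finset.sum_const, nsmul_eq_mul] at dc
    rw [hnn, dc]
    apply Finset.sum_congr rfl
    intro F hF
    rw [pts_inf]
    rfl
  have d2 : ∑ F ∈ up f m T, ((pts T (F ⊓ M)).offDiag.card : ℚ) ≤ (n * (n - 1)) * N2 := by
    have dc := congrArg (Nat.cast : ℕ → ℚ) (Finset.sum_card_bipartiteAbove_eq_sum_card_bipartiteBelow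
      (s := (pts T M).offDiag) (t := up f m T) (fun X F => X.1 ≤ F ∧ X.2 ≤ F))
    push_cast at dc
    have h1 : ∀ X ∈ (pts T M).offDiag,
        (((up f m T).bipartiteAbove (fun X F => X.1 ≤ F ∧ X.2 ≤ F) X).card : ℚ) ≤ N2 := by
      rintro ⟨X, Y⟩ hXY
      rw [Finset.mem_offDiag] at hXY
      obtain ⟨hX, hY, hne⟩ := hXY
      have hr := finrank_sup_pts T M X Y hX hY hne
      rw [mem_pts] at hX hY
      refine le_trans ?_ (card_up_le ν f hV halt hnd (X ⊔ Y) (hiso _ (sup_le hX.2.1 hY.2.1))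
        (t + 2) m (by omega) hmν)
      rw [Nat.cast_le]
      apply Finset.card_le_card
      intro F
      rw [Finset.bipartiteAbove, Finset.mem_filter, mem_up, mem_up]
      rintro ⟨h, h'⟩; exact ⟨h.1, sup_le h'.1 h'.2⟩
    have h2 := Finset.sum_le_sum h1
    rw [dc, Finset.sum_const, nsmul_eq_mul] at h2
    have hoff : ((pts T M).offDiag.card : ℚ) = n * (n - 1) := by
      rw [Finset.offDiag_card, Nat.cast_sub (Nat.le_mul_self _)]
      push_cast
      ring
    rw [hoff] at h2
    refine le_trans (le_of_eq ?_) h2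
    apply Finset.sum_congr rfl
    intro F hF
    rw [pts_inf]
    congr 2
    ext ⟨X, Y⟩
    simp only [Finset.bipartiteBelow, Finset.mem_filter, Finset.mem_offDiag]
    tauto
  have d3 := Finset.sum_le_sum (s := up f m T) (fun F hF =>
    ptwise T (F ⊓ M) (le_inf ((mem_up f m T F).1 hF).2 hTM))
  rw [Finset.sum_sub_distrib, ← Finset.sum_div, d1, hT, Finset.sum_boole] at d3
  refine le_trans ?_ d3
  have hs0 : s0 (Fintype.card K) ν m s t = n * N1 - n * (n - 1) * N2 / ((Fintype.card K : ℚ) + 1) := by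
    unfold s0 gaussBinom
    rw [← hN1, ← hN2]
    set q : ℚ := (Fintype.card K : ℚ)
    obtain ⟨j, hj⟩ := Nat.exists_eq_add_of_le hs
    rw [show s - t = j + 2 by omega] at hn ⊢
    have e1 : q ^ (((j + 2 : ℕ) : ℤ) - 1) = q ^ (j + 1) := by
      rw [← zpow_natCast]; congr 1; push_cast; ring
    have e2 : q ^ (((j + 2 : ℕ) : ℤ)) = q ^ (j + 2) := zpow_natCast _ _
    have hq0 : q - 1 ≠ 0 := by linarith
    have hq2 : q + 1 ≠ 0 := by linarith
    have hq3 : q ^ 2 - 1 ≠ 0 := by nlinarith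
    have hn' : (n:ℚ) = (q ^ (j + 2) - 1) / (q - 1) := by rw [← hn]; field_simp
    have hz : q ^ (2:ℤ) = q ^ 2 := by norm_cast
    simp only [Finset.prod_range_succ, Finset.prod_range_zero, one_mul, Nat.cast_zero, sub_zero,
      Nat.cast_one, e1, e2, zpow_one, Nat.cast_ofNat, hz,
      show (2:ℤ) - 1 = 1 by norm_num]
    rw [hn', show q ^ 2 - 1 = (q - 1) * (q + 1) by ring]
    field_simp
    ring
  rw [hs0]
  have : 0 < (Fintype.card K : ℚ) + 1 := by linarith
  gcongr

lemma exists_hyper (M T : Submodule K V) (m : ℕ) (hM : finrank K M = m + 1) (hTM : T ≤ M)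
    (hT : 0 < finrank K T) : ∃ W ≤ M, finrank K W = m ∧ ¬ T ≤ W := by
  obtain ⟨x, hx, hx0⟩ : ∃ x ∈ T, x ≠ 0 := by
    apply Submodule.exists_mem_ne_zero_of_ne_bot
    rintro rfl
    simp at hT
  obtain ⟨C, hC⟩ := Submodule.exists_isCompl (Submodule.span K {x})
  have hxM : Submodule.span K {x} ≤ M := by
    rw [Submodule.span_singleton_le_iff_mem]; exact hTM hx
  have hxC : x ∉ C := by
    intro h
    have := hC.disjoint
    rw [Submodule.disjoint_def] at this
    exact hx0 (this x (Submodule.mem_span_singleton_self x) h)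
  refine ⟨C ⊓ M, inf_le_right, ?_, fun h => hxC (h hx).1⟩
  have e : (C ⊓ M) ⊔ Submodule.span K {x} = M := by
    rw [sup_comm, ← sup_inf_assoc_of_le C hxM, hC.sup_eq_top, top_inf_eq]
  have := finrank_sup_span (C ⊓ M) x (fun h => hxC h.1)
  rw [e] at this
  omega

end Aux13


theorem stmt_13
    (q ν m₁ m₂ t : ℕ) (hq : IsPrimePow q)
    {K : Type} [Field K] [Fintype K] (hK : Fintype.card K = q)
    (f : (Fin (2 * ν) → K) →ₗ[K] (Fin (2 * ν) → K) →ₗ[K] K)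
    (halt : ∀ v, f v v = 0)
    (hnd : ∀ v, (∀ w, f v w = 0) → v = 0)
    (ht : 0 < t) (hm₁ : t + 1 ≤ m₁) (hm₂ : t + 1 ≤ m₂) (hm₁ν : m₁ < ν) (hm₂ν : m₂ < ν)
    (M : Submodule K (Fin (2 * ν) → K)) (hM : M ∈ polar f (m₂ + 1))
    (T : Submodule K (Fin (2 * ν) → K)) (hTM : T ≤ M) (hT : finrank K T = t) :
    s0 q ν m₁ (m₂ + 1) t * Nprime q t m₂ ν <
      ((C1 f M T m₁ t).ncard : ℚ) * (C2 f M T m₂).ncard := by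
  classical
  subst hK
  have hV : finrank K (Fin (2 * ν) → K) = 2 * ν := by simp
  obtain ⟨hMi, hMr⟩ := hM
  have hTi : TotallyIsotropic f T := fun x hx y hy => hMi x (hTM hx) y (hTM hy)
  have hA := Aux13.s0_le ν m₁ t (m₂ + 1) f hV halt hnd hm₁ hm₁ν.le (by omega) M hMi hMr T hTM hT
  have hC1 : C1 f M T m₁ t = ↑((Aux13.up f m₁ T).filter
      (fun F => t + 1 ≤ finrank K ↥(F ⊓ M))) := by
    ext F
    rw [Finset.mem_coe, Finset.mem_filter, Aux13.mem_up]
    exact ⟨fun h => ⟨⟨h.1, h.2.1⟩, h.2.2⟩, fun h => ⟨h.1.1, h.1.2, h.2⟩⟩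
  obtain ⟨W, hWM, hWr, hTW⟩ := Aux13.exists_hyper M T m₂ hMr hTM (by omega)
  have hC2 : Nprime (Fintype.card K) t m₂ ν + 1 ≤ ((C2 f M T m₂).ncard : ℚ) := by
    rw [← Aux13.card_up' ν f hV halt hnd T hTi t m₂ hT (by omega) hm₂ν.le]
    have hW : W ∉ Aux13.up f m₂ T := by
      rw [Aux13.mem_up]; exact fun h => hTW h.2
    rw [← Nat.cast_succ, Nat.cast_le, Nat.succ_eq_add_one, ← Finset.card_insert_of_notMem hW,
      ← Set.ncard_coe_finset]
    apply Set.ncard_le_ncard _ (Set.toFinite _)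
    intro F hF
    rw [Finset.mem_coe, Finset.mem_insert, Aux13.mem_up] at hF
    rcases hF with rfl | hF
    · exact Or.inr ⟨⟨fun x hx y hy => hMi x (hWM hx) y (hWM hy), hWr⟩, hWM⟩
    · exact Or.inl hF
  have hpos : 0 < ((C1 f M T m₁ t).ncard : ℚ) := by
    rw [Nat.cast_pos, Set.ncard_pos (Set.toFinite _)]
    obtain ⟨v, hv, hvT⟩ : ∃ v ∈ M, v ∉ T := by
      by_contra! hc
      have : M ≤ T := hc
      have := Submodule.finrank_mono this
      omega
    have hXM : T ⊔ Submodule.span K {v} ≤ M :=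
      sup_le hTM (by rwa [Submodule.span_singleton_le_iff_mem])
    have hXr := Aux13.finrank_sup_span T v hvT
    have hc := Aux13.card_up' ν f hV halt hnd (T ⊔ Submodule.span K {v})
      (fun x hx y hy => hMi x (hXM hx) y (hXM hy)) (t + 1) m₁ (by omega) hm₁ hm₁ν.le
    have hc' := Aux13.Nprime_pos (Fintype.card K) (t + 1) m₁ ν Fintype.one_lt_card hm₁ν.le
    rw [← hc, Nat.cast_pos, Finset.card_pos] at hc'
    obtain ⟨F, hF⟩ := hc'
    rw [Aux13.mem_up] at hF
    refine ⟨F, hF.1, le_sup_left.trans hF.2, ?_⟩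
    have := Submodule.finrank_mono (le_inf hF.2 hXM)
    omega
  have hN := Aux13.Nprime_pos (Fintype.card K) t m₂ ν Fintype.one_lt_card hm₂ν.le
  have hA' : s0 (Fintype.card K) ν m₁ (m₂ + 1) t ≤ ((C1 f M T m₁ t).ncard : ℚ) := by
    rw [hC1, Set.ncard_coe_finset]
    convert hA
  calc _ ≤ ((C1 f M T m₁ t).ncard : ℚ) * Nprime (Fintype.card K) t m₂ ν :=
        mul_le_mul_of_nonneg_right hA' hN.le
    _ < _ := mul_lt_mul_of_pos_left (by linarith) hpos

end
end

section
/- Let q be a prime power and let ν, m₁, m₂, t be positive integers with ν > m₁ ≥ t+1, ν > m₂ ≥ t+1, and 2ν ≥ m₁ + 2m₂ − t + 4. Then for every M ∈ 𝒫_{m₂+1} and every t-dimensional subspace T of M, |𝒞₁(M,T;m₁,t)|·|𝒞₂(M,T;m₂)| > ([m₂−t+1 choose 1]_q − q^{−2})·N'(t+1;m₁;2ν)·N'(t;m₂;2ν). -/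
open Finset Module

noncomputable section

variable {K V : Type*} [Field K] [AddCommGroup V] [Module K V]

lemma aux_card_s14 [Fintype K] [Finite V] (W : Submodule K V) :
    (W : Set V).ncard = Fintype.card K ^ finrank K W := by
  have : Module.Finite K V := Module.Finite.of_finite
  rw [← Nat.card_coe_set_eq, ← Nat.card_eq_fintype_card]
  exact Module.natCard_eq_pow_finrank (K := K) (V := W)

lemma aux_card_diff [Fintype K] [Finite V] (A W : Submodule K V) (h : A ≤ W) :
    (((W : Set V) \ (A : Set V)).ncard : ℚ) =
      (Fintype.card K : ℚ) ^ finrank K W - (Fintype.card K : ℚ) ^ finrank K A := by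
  have h1 := Set.ncard_sdiff_add_ncard_of_subset (s := (A : Set V)) (t := (W : Set V)) h
    (Set.toFinite _)
  rw [aux_card_s14, aux_card_s14] at h1
  have h2 : (((W : Set V) \ (A : Set V)).ncard : ℚ) +
    (Fintype.card K : ℚ) ^ finrank K A = (Fintype.card K : ℚ) ^ finrank K W := by
    exact_mod_cast h1
  linarith

lemma aux_dc [Fintype K] [Finite V] (A W : Submodule K V) (b c : ℕ) (hAW : A ≤ W)
    (S : Set (Submodule K V)) (hS : ∀ F ∈ S, A ≤ F ∧ F ≤ W ∧ finrank K F = b)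
    (hc : ∀ v ∈ W, v ∉ A → {F | F ∈ S ∧ v ∈ F}.ncard = c) :
    (S.ncard : ℚ) * ((Fintype.card K : ℚ) ^ b - (Fintype.card K : ℚ) ^ finrank K A) =
      ((Fintype.card K : ℚ) ^ finrank K W - (Fintype.card K : ℚ) ^ finrank K A) * c := by
  classical
  have : Fintype V := Fintype.ofFinite V
  have : Fintype (Submodule K V) := Fintype.ofFinite _
  have key := Finset.sum_card_bipartiteAbove_eq_sum_card_bipartiteBelow
    (s := S.toFinset) (t := ((W : Set V) \ (A : Set V)).toFinset)
    (fun (F : Submodule K V) (v : V) => v ∈ F)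
  have h1 : ∀ F ∈ S.toFinset, ((Finset.bipartiteAbove (fun (F : Submodule K V) (v : V) => v ∈ F)
      ((W : Set V) \ (A : Set V)).toFinset F).card : ℚ) =
      (Fintype.card K : ℚ) ^ b - (Fintype.card K : ℚ) ^ finrank K A := by
    intro F hF
    obtain ⟨h1, h2, h3⟩ := hS F (by simpa using hF)
    rw [← h3, ← aux_card_diff A F h1, Set.ncard_eq_toFinset_card']
    congr 2
    ext v
    simp only [Finset.mem_bipartiteAbove, Set.mem_toFinset, Set.mem_sdiff, SetLike.mem_coe]
    exact ⟨fun h => ⟨h.2, h.1.2⟩, fun h => ⟨⟨h2 h.1, h.2⟩, h.1⟩⟩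
  have h2 : ∀ v ∈ ((W : Set V) \ (A : Set V)).toFinset,
      ((Finset.bipartiteBelow (fun (F : Submodule K V) (v : V) => v ∈ F)
      S.toFinset v).card : ℚ) = c := by
    intro v hv
    simp only [Set.mem_toFinset, Set.mem_sdiff, SetLike.mem_coe] at hv
    rw [← hc v hv.1 hv.2, Set.ncard_eq_toFinset_card']
    congr 2
    ext F
    simp [Finset.mem_bipartiteBelow]
  have key' : ∑ F ∈ S.toFinset, ((Finset.bipartiteAbove
      (fun (F : Submodule K V) (v : V) => v ∈ F)
      ((W : Set V) \ (A : Set V)).toFinset F).card : ℚ) =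
      ∑ v ∈ ((W : Set V) \ (A : Set V)).toFinset,
      ((Finset.bipartiteBelow (fun (F : Submodule K V) (v : V) => v ∈ F)
      S.toFinset v).card : ℚ) := by exact_mod_cast key
  rw [Finset.sum_congr rfl h1, Finset.sum_congr rfl h2, Finset.sum_const, Finset.sum_const,
    nsmul_eq_mul, nsmul_eq_mul, ← Set.ncard_eq_toFinset_card', ← Set.ncard_eq_toFinset_card',
    aux_card_diff A W hAW] at key'
  exact key'

lemma aux_sup_rank [Finite V] (A : Submodule K V) (v : V) (hv : v ∉ A) :
    finrank K ↥(A ⊔ Submodule.span K {v}) = finrank K A + 1 := by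
  have : Module.Finite K V := Module.Finite.of_finite
  have h := Submodule.finrank_sup_add_finrank_inf_eq A (Submodule.span K {v})
  have hd : A ⊓ Submodule.span K {v} = ⊥ := by
    rw [← disjoint_iff]
    exact Submodule.disjoint_span_singleton_of_notMem hv
  have hv0 : v ≠ 0 := fun h => hv (h ▸ A.zero_mem)
  rw [hd, finrank_bot, finrank_span_singleton hv0] at h
  simpa using h

lemma aux_iso_sup (f : V →ₗ[K] V →ₗ[K] K) (halt : ∀ v, f v v = 0) (A : Submodule K V)
    (hA : TotallyIsotropic f A) (v : V) (hv : ∀ x ∈ A, f x v = 0) :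
    TotallyIsotropic f (A ⊔ Submodule.span K {v}) := by
  have hv' : ∀ x ∈ A, f v x = 0 := by
    intro x hx
    have := halt (x + v)
    simp only [map_add, LinearMap.add_apply, halt, hv x hx] at this
    simpa using this
  intro x hx y hy
  obtain ⟨a, ha, w, hw, rfl⟩ := Submodule.mem_sup.1 hx
  obtain ⟨b, hb, u, hu, rfl⟩ := Submodule.mem_sup.1 hy
  obtain ⟨r, rfl⟩ := Submodule.mem_span_singleton.1 hw
  obtain ⟨s, rfl⟩ := Submodule.mem_span_singleton.1 hu
  simp [halt, hA a ha b hb, hv a ha, hv' b hb]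

lemma aux_Nprime_step (q a m ν : ℕ) (h : a < m) :
    Nprime q a m ν = Nprime q (a + 1) m ν *
      (((q : ℚ) ^ (2 * ((ν : ℤ) - a)) - 1) / ((q : ℚ) ^ (m - a) - 1)) := by
  unfold Nprime
  obtain ⟨d, rfl⟩ : ∃ d, m = a + 1 + d := ⟨m - (a + 1), by omega⟩
  have e1 : a + 1 + d - a = d + 1 := by omega
  have e2 : a + 1 + d - (a + 1) = d := by omega
  rw [e1, e2, Finset.prod_Icc_succ_top (by omega)]
  congr 3
  · congr 2
    push_cast
    ring

lemma aux_count_s14 [Fintype K] [Finite V] (f : V →ₗ[K] V →ₗ[K] K) (ν : ℕ)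
    (hV : finrank K V = 2 * ν)
    (halt : ∀ v, f v v = 0) (hnd : ∀ v, (∀ w, f v w = 0) → v = 0) (m : ℕ) (hm : m ≤ ν) (d : ℕ) :
    ∀ (a : ℕ) (A : Submodule K V), a + d = m → A ∈ polar f a →
      ((C3 f A m).ncard : ℚ) = Nprime (Fintype.card K) a m ν := by
  have : Module.Finite K V := Module.Finite.of_finite
  have hq : 1 < Fintype.card K := Fintype.one_lt_card
  have hq' : (1 : ℚ) < (Fintype.card K : ℚ) := by exact_mod_cast hq
  have hq0 : (Fintype.card K : ℚ) ≠ 0 := by positivity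
  induction d with
  | zero =>
    intro a A ham hA
    have : C3 f A m = {A} := by
      ext F
      simp only [C3, Set.mem_ofPred_eq, Set.mem_singleton_iff]
      constructor
      · rintro ⟨⟨_, h2⟩, h3⟩
        exact (Submodule.eq_of_le_of_finrank_eq h3 (by rw [hA.2, h2]; omega)).symm
      · rintro rfl
        have : a = m := by omega
        exact ⟨this ▸ hA, le_rfl⟩
    rw [this, Set.ncard_singleton]
    have e : m - a = 0 := by omega
    simp [Nprime, e]
  | succ d ih =>
    intro a A ham hA
    have hr : ∀ x y, f x y = 0 → f y x = 0 := by
      intro x y h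
      have := halt (x + y)
      simp only [map_add, LinearMap.add_apply, halt, h] at this
      simpa using this
    let B : LinearMap.BilinForm K V := f
    have hB : B.Nondegenerate :=
      ⟨hnd, fun y hy => hnd y fun w => hr _ _ (hy w)⟩
    have hmem : ∀ v, v ∈ B.orthogonal A ↔ ∀ x ∈ A, f x v = 0 := by
      intro v
      rw [LinearMap.BilinForm.mem_orthogonal_iff]
    have hfr : finrank K (B.orthogonal A) = 2 * ν - a := by
      rw [LinearMap.BilinForm.finrank_orthogonal hB, hV, hA.2]
    have hAW : A ≤ B.orthogonal A := fun v hv => (hmem v).2 fun x hx => hA.1 x hx v hv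
    have hcst : ∃ c : ℕ, ∀ v ∈ B.orthogonal A, v ∉ A →
        {F | F ∈ C3 f A m ∧ v ∈ F}.ncard = c ∧ (c : ℚ) = Nprime (Fintype.card K) (a + 1) m ν := by
      have hst : ∀ v ∈ B.orthogonal A, v ∉ A → ({F | F ∈ C3 f A m ∧ v ∈ F}.ncard : ℚ)
          = Nprime (Fintype.card K) (a + 1) m ν := by
        intro v hv hvA
        rw [← ih (a + 1) (A ⊔ Submodule.span K {v}) (by omega)
          ⟨aux_iso_sup f halt A hA.1 v ((hmem v).1 hv), by rw [aux_sup_rank A v hvA, hA.2]⟩]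
        congr 2
        ext F
        simp only [C3, Set.mem_ofPred_eq, sup_le_iff, Submodule.span_singleton_le_iff_mem]
        tauto
      by_cases hex : ∃ v ∈ B.orthogonal A, v ∉ A
      · obtain ⟨v, hv, hvA⟩ := hex
        refine ⟨{F | F ∈ C3 f A m ∧ v ∈ F}.ncard, fun w hw hwA => ⟨?_, hst v hv hvA⟩⟩
        have := (hst w hw hwA).trans (hst v hv hvA).symm
        exact_mod_cast this
      · push Not at hex
        exact ⟨0, fun v hv hvA => absurd (hex v hv) hvA⟩
    have hex : ∃ v ∈ B.orthogonal A, v ∉ A := by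
      by_contra hcon
      push Not at hcon
      have h1 : finrank K (B.orthogonal A) ≤ finrank K A := Submodule.finrank_mono hcon
      rw [hfr, hA.2] at h1
      omega
    obtain ⟨c, hc⟩ := hcst
    obtain ⟨v0, hv0, hv0A⟩ := hex
    have hcN := (hc v0 hv0 hv0A).2
    have key := aux_dc A (B.orthogonal A) m c hAW (C3 f A m)
      (fun F hF => ⟨hF.2, fun v hv => (hmem v).2 fun x hx => hF.1.1 x (hF.2 hx) v hv, hF.1.2⟩)
      (fun v hv hvA => (hc v hv hvA).1)
    rw [hcN, hfr, hA.2] at key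
    rw [aux_Nprime_step _ _ _ _ (by omega : a < m)]
    set Q : ℚ := (Fintype.card K : ℚ)
    have e1 : Q ^ m = Q ^ a * Q ^ (m - a) := by rw [← pow_add]; congr 1; omega
    have e2 : Q ^ (2 * ν - a) = Q ^ a * Q ^ (2 * ((ν : ℤ) - a)) := by
      rw [← zpow_natCast, ← zpow_natCast, ← zpow_add₀ hq0]
      congr 1
      have : a ≤ 2 * ν := by omega
      push_cast [this]
      ring
    rw [e1, e2] at key
    have hpos : Q ^ (m - a) - 1 ≠ 0 := by
      have := one_lt_pow₀ hq' (by omega : m - a ≠ 0)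
      linarith
    have hqa : Q ^ a ≠ 0 := pow_ne_zero _ hq0
    rw [mul_div_assoc', eq_div_iff hpos]
    apply mul_left_cancel₀ hqa
    linear_combination key

lemma aux_points [Fintype K] [Finite V] (T M : Submodule K V) (hTM : T ≤ M) :
    (({S | T ≤ S ∧ S ≤ M ∧ finrank K S = finrank K T + 1}.ncard : ℕ) : ℚ) *
      ((Fintype.card K : ℚ) - 1) = (Fintype.card K : ℚ) ^ (finrank K M - finrank K T) - 1 := by
  have : Module.Finite K V := Module.Finite.of_finite
  have hq : 1 < Fintype.card K := Fintype.one_lt_card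
  have hq0 : (Fintype.card K : ℚ) ≠ 0 := by positivity
  have key := aux_dc T M (finrank K T + 1) 1 hTM
    {S | T ≤ S ∧ S ≤ M ∧ finrank K S = finrank K T + 1} (fun F hF => hF) (by
      intro v hv hvT
      rw [Set.ncard_eq_one]
      refine ⟨T ⊔ Submodule.span K {v}, ?_⟩
      ext S
      simp only [Set.mem_ofPred_eq, Set.mem_singleton_iff]
      constructor
      · rintro ⟨⟨h1, h2, h3⟩, h4⟩
        refine (Submodule.eq_of_le_of_finrank_eq
          (sup_le h1 ((Submodule.span_singleton_le_iff_mem _ _).2 h4)) ?_).symm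
        rw [aux_sup_rank T v hvT, h3]
      · rintro rfl
        refine ⟨⟨le_sup_left, sup_le hTM ((Submodule.span_singleton_le_iff_mem _ _).2 hv),
          aux_sup_rank T v hvT⟩, ?_⟩
        exact (Submodule.span_singleton_le_iff_mem _ _).1 le_sup_right)
  have hle : finrank K T ≤ finrank K M := Submodule.finrank_mono hTM
  set Q : ℚ := (Fintype.card K : ℚ)
  have e1 : Q ^ finrank K M = Q ^ finrank K T * Q ^ (finrank K M - finrank K T) := by
    rw [← pow_add]; congr 1; omega
  rw [e1] at key
  apply mul_left_cancel₀ (pow_ne_zero (finrank K T) hq0)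
  push_cast at key
  linear_combination key

/-- Bonferroni-type bound. -/
lemma aux_bonf {α β : Type*} [DecidableEq β] (𝒢 : Finset α) (𝒮 : Finset β) (r : β → α → Prop)
    [∀ s x, Decidable (r s x)] (N1 N2 : ℚ)
    (h1 : ∀ s ∈ 𝒮, ((𝒢.filter (fun x => r s x)).card : ℚ) = N1)
    (h2 : ∀ s ∈ 𝒮, ∀ s' ∈ 𝒮, s ≠ s' →
      ((𝒢.filter (fun x => r s x ∧ r s' x)).card : ℚ) = N2) :
    (𝒮.card : ℚ) * N1 - (𝒮.card : ℚ) * (𝒮.card - 1) * N2 / 2 ≤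
      ((𝒢.filter (fun x => ∃ s ∈ 𝒮, r s x)).card : ℚ) := by
  have e1 : ∑ x ∈ 𝒢, ∑ s ∈ 𝒮, (if r s x then (1 : ℚ) else 0) = 𝒮.card * N1 := by
    rw [Finset.sum_comm, ← nsmul_eq_mul, ← Finset.sum_const]
    refine Finset.sum_congr rfl fun s hs => ?_
    rw [← h1 s hs, Finset.card_filter]
    push_cast
    rfl
  have e2 : ∑ x ∈ 𝒢, (∑ s ∈ 𝒮, (if r s x then (1 : ℚ) else 0)) *
      (∑ s ∈ 𝒮, (if r s x then (1 : ℚ) else 0)) =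
      𝒮.card * (N1 + (𝒮.card - 1) * N2) := by
    simp_rw [Finset.sum_mul_sum]
    rw [Finset.sum_comm, ← nsmul_eq_mul, ← Finset.sum_const]
    refine Finset.sum_congr rfl fun s hs => ?_
    rw [Finset.sum_comm, ← Finset.add_sum_erase _ _ hs]
    congr 1
    · rw [← h1 s hs, Finset.card_filter]
      push_cast
      refine Finset.sum_congr rfl fun x _ => ?_
      split_ifs <;> simp
    · have hc : ((𝒮.erase s).card : ℚ) = 𝒮.card - 1 := by
        rw [Finset.card_erase_of_mem hs, Nat.cast_sub (Finset.card_pos.2 ⟨s, hs⟩)]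
        simp
      rw [← hc, ← nsmul_eq_mul, ← Finset.sum_const]
      refine Finset.sum_congr rfl fun s' hs' => ?_
      rw [Finset.mem_erase] at hs'
      rw [← h2 s hs s' hs'.2 hs'.1.symm, Finset.card_filter]
      push_cast
      refine Finset.sum_congr rfl fun x _ => ?_
      by_cases p1 : r s x <;> by_cases p2 : r s' x <;> simp [p1, p2]
  have e3 : ∑ x ∈ 𝒢, ((3 / 2 : ℚ) * (∑ s ∈ 𝒮, (if r s x then (1 : ℚ) else 0)) -
      (1 / 2) * ((∑ s ∈ 𝒮, (if r s x then (1 : ℚ) else 0)) *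
      (∑ s ∈ 𝒮, (if r s x then (1 : ℚ) else 0)))) ≤
      ((𝒢.filter (fun x => ∃ s ∈ 𝒮, r s x)).card : ℚ) := by
    rw [Finset.card_filter]
    push_cast
    refine Finset.sum_le_sum fun x _ => ?_
    have hn : ∑ s ∈ 𝒮, (if r s x then (1 : ℚ) else 0) = ((𝒮.filter (fun s => r s x)).card : ℚ) := by
      rw [Finset.card_filter]
      push_cast
      rfl
    rw [hn]
    split_ifs with hx
    · rcases Nat.lt_or_ge (𝒮.filter (fun s => r s x)).card 2 with h | h
      · have h' : (𝒮.filter (fun s => r s x)).card = 0 ∨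
          (𝒮.filter (fun s => r s x)).card = 1 := by omega
        rcases h' with h' | h' <;> rw [h'] <;> norm_num
      · have h' : (2 : ℚ) ≤ ((𝒮.filter (fun s => r s x)).card : ℚ) := by exact_mod_cast h
        nlinarith
    · have : 𝒮.filter (fun s => r s x) = ∅ := by
        rw [Finset.filter_eq_empty_iff]
        intro s hs hr
        exact hx ⟨s, hs, hr⟩
      rw [this]
      simp
  rw [Finset.sum_sub_distrib, ← Finset.mul_sum, ← Finset.mul_sum, e1, e2] at e3
  linarith

lemma aux_Nprime_pos (q a m ν : ℕ) (hq : 1 < q) (hm : m ≤ ν) : 0 < Nprime q a m ν := by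
  have hq' : (1 : ℚ) < (q : ℚ) := by exact_mod_cast hq
  unfold Nprime
  refine Finset.prod_pos fun i hi => ?_
  rw [Finset.mem_Icc] at hi
  apply div_pos
  · have := one_lt_zpow₀ hq' (by omega : (0 : ℤ) < 2 * ((ν : ℤ) - m + i))
    linarith
  · have := one_lt_zpow₀ hq' (by omega : (0 : ℤ) < (i : ℤ))
    linarith

lemma aux_ineq (Q g N1 N2 : ℚ) (n k e : ℕ) (hQ : 2 ≤ Q) (hN2 : 0 < N2)
    (hn : 1 ≤ n) (hk : 1 ≤ k) (hg : g * (Q - 1) = Q ^ n - 1)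
    (he : 2 * n + (k + 1) ≤ e)
    (hN : N1 * (Q ^ k - 1) = N2 * (Q ^ e - 1)) :
    Q ^ 2 * (g * (g - 1)) * N2 < 2 * N1 := by
  have hQ1 : 1 < Q := by linarith
  have hx : Q ≤ Q ^ n := by simpa using pow_le_pow_right₀ hQ1.le hn
  have hy : Q ≤ Q ^ k := by simpa using pow_le_pow_right₀ hQ1.le hk
  have hz : (Q ^ n) ^ 2 * (Q ^ k * Q) ≤ Q ^ e := by
    have := pow_le_pow_right₀ hQ1.le he
    calc _ = Q ^ (2 * n + (k + 1)) := by ring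
      _ ≤ _ := this
  have hg2 : (g - 1) * (Q - 1) = Q ^ n - Q := by linear_combination hg
  set x := Q ^ n
  set y := Q ^ k
  set z := Q ^ e
  have hy1 : 0 < y - 1 := by linarith
  have hP : 0 < (Q - 1) ^ 2 := by nlinarith
  -- the numeric core
  have core : Q ^ 2 * ((x - 1) * (x - Q)) * (y - 1) < 2 * (Q - 1) ^ 2 * (z - 1) := by
    have a1 : (x - 1) * (x - Q) ≤ x ^ 2 - 1 := by nlinarith
    have a0 : Q ≤ 2 * (Q - 1) ^ 2 := by nlinarith
    have hx2 : 1 ≤ x ^ 2 := by nlinarith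
    have a2 : Q ^ 2 * ((x - 1) * (x - Q)) * (y - 1) ≤ Q ^ 2 * (x ^ 2 - 1) * (y - 1) := by
      gcongr
    have a3 : Q ^ 2 * (x ^ 2 - 1) * (y - 1) < Q * (x ^ 2 * (y * Q) - 1) := by
      have : Q * (x ^ 2 * (y * Q) - 1) - Q ^ 2 * (x ^ 2 - 1) * (y - 1)
        = Q ^ 2 * (x ^ 2 - 1) + Q * (Q * y - 1) := by ring
      have b1 : 0 ≤ Q ^ 2 * (x ^ 2 - 1) := by
        apply mul_nonneg (by positivity); linarith
      have b2 : 0 < Q * (Q * y - 1) := by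
        apply mul_pos (by linarith); nlinarith
      linarith
    have hw : 0 ≤ x ^ 2 * (y * Q) - 1 := by
      have : 1 ≤ y * Q := by nlinarith
      nlinarith
    have a4 : Q * (x ^ 2 * (y * Q) - 1) ≤ 2 * (Q - 1) ^ 2 * (x ^ 2 * (y * Q) - 1) := by
      gcongr
    have a5 : 2 * (Q - 1) ^ 2 * (x ^ 2 * (y * Q) - 1) ≤ 2 * (Q - 1) ^ 2 * (z - 1) := by
      gcongr
    linarith
  have h1 : (Q ^ 2 * (g * (g - 1)) * N2) * ((Q - 1) ^ 2 * (y - 1)) =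
      (Q ^ 2 * ((x - 1) * (x - Q)) * (y - 1)) * N2 := by
    rw [← hg, ← hg2]; ring
  have h2 : (2 * N1) * ((Q - 1) ^ 2 * (y - 1)) = (2 * (Q - 1) ^ 2 * (z - 1)) * N2 := by
    linear_combination 2 * (Q - 1) ^ 2 * hN
  have h3 : (Q ^ 2 * (g * (g - 1)) * N2) * ((Q - 1) ^ 2 * (y - 1)) <
      (2 * N1) * ((Q - 1) ^ 2 * (y - 1)) := by
    rw [h1, h2]
    exact mul_lt_mul_of_pos_right core hN2
  exact lt_of_mul_lt_mul_right h3 (by positivity)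

theorem stmt_14
    (q ν m₁ m₂ t : ℕ) (hq : IsPrimePow q)
    {K : Type} [Field K] [Fintype K] (hK : Fintype.card K = q)
    (f : (Fin (2 * ν) → K) →ₗ[K] (Fin (2 * ν) → K) →ₗ[K] K)
    (halt : ∀ v, f v v = 0)
    (hnd : ∀ v, (∀ w, f v w = 0) → v = 0)
    (ht : 0 < t) (hm₁ : t + 1 ≤ m₁) (hm₂ : t + 1 ≤ m₂) (hm₁ν : m₁ < ν) (hm₂ν : m₂ < ν)
    (hdim : m₁ + 2 * m₂ + 4 ≤ 2 * ν + t)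
    (M : Submodule K (Fin (2 * ν) → K)) (hM : M ∈ polar f (m₂ + 1))
    (T : Submodule K (Fin (2 * ν) → K)) (hTM : T ≤ M) (hT : finrank K T = t) :
    (gaussBinom q (m₂ - t + 1) 1 - (q : ℚ) ^ (-2 : ℤ)) *
        Nprime q (t + 1) m₁ ν * Nprime q t m₂ ν <
      ((C1 f M T m₁ t).ncard : ℚ) * (C2 f M T m₂).ncard := by
  classical
  have hV : finrank K (Fin (2 * ν) → K) = 2 * ν := by simp
  have hq1 : 1 < q := hK ▸ Fintype.one_lt_card
  have hq1' : (1 : ℚ) < (q : ℚ) := by exact_mod_cast hq1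
  have hq2' : (2 : ℚ) ≤ (q : ℚ) := by exact_mod_cast hq1
  have hcount : ∀ (m : ℕ), m ≤ ν → ∀ (a : ℕ) (A : Submodule K (Fin (2 * ν) → K)), a ≤ m →
      A ∈ polar f a → ((C3 f A m).ncard : ℚ) = Nprime q a m ν := by
    intro m hm a A ham hA
    have := aux_count_s14 f ν hV halt hnd m hm (m - a) a A (by omega) hA
    rwa [hK] at this
  have hTP : T ∈ polar f t := ⟨fun x hx y hy => hM.1 x (hTM hx) y (hTM hy), hT⟩
  -- the second family
  have hC2 : Nprime q t m₂ ν ≤ ((C2 f M T m₂).ncard : ℚ) := by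
    rw [← hcount m₂ hm₂ν.le t T (by omega) hTP]
    exact_mod_cast Set.ncard_le_ncard (fun F hF => Or.inl hF) (Set.toFinite _)
  -- the points
  have hpts := aux_points T M hTM
  rw [hK, hT, hM.2] at hpts
  set PS : Set (Submodule K (Fin (2 * ν) → K)) := {S | T ≤ S ∧ S ≤ M ∧ finrank K S = t + 1}
    with hPS
  have : Fintype (Submodule K (Fin (2 * ν) → K)) := Fintype.ofFinite _
  set N2 : ℚ := if m₁ = t + 1 then 0 else Nprime q (t + 2) m₁ ν with hN2
  have hbonf := aux_bonf (C3 f T m₁).toFinset PS.toFinset (fun S F => S ≤ F)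
    (Nprime q (t + 1) m₁ ν) N2 (by
      intro S hS
      obtain ⟨h1, h2, h3⟩ : T ≤ S ∧ S ≤ M ∧ finrank K S = t + 1 := by simpa [hPS] using hS
      rw [← hcount m₁ hm₁ν.le (t + 1) S hm₁
        ⟨fun x hx y hy => hM.1 x (h2 hx) y (h2 hy), h3⟩, Set.ncard_eq_toFinset_card']
      congr 2
      ext F
      simp only [Finset.mem_filter, Set.mem_toFinset]
      exact ⟨fun h => ⟨h.1.1, h.2⟩, fun h => ⟨⟨h.1, h1.trans h.2⟩, h.2⟩⟩) (by
      intro S hS S' hS' hne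
      obtain ⟨h1, h2, h3⟩ : T ≤ S ∧ S ≤ M ∧ finrank K S = t + 1 := by simpa [hPS] using hS
      obtain ⟨h1', h2', h3'⟩ : T ≤ S' ∧ S' ≤ M ∧ finrank K S' = t + 1 := by
        simpa [hPS] using hS'
      have hsup := Submodule.finrank_sup_add_finrank_inf_eq S S'
      have hge : t ≤ finrank K ↥(S ⊓ S') := hT ▸ Submodule.finrank_mono (le_inf h1 h1')
      have hlt : finrank K ↥(S ⊓ S') < t + 1 := by
        by_contra hcon
        push Not at hcon
        have q1 : S ⊓ S' = S := Submodule.eq_of_le_of_finrank_le inf_le_left (by omega)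
        have q2 : S ⊓ S' = S' := Submodule.eq_of_le_of_finrank_le inf_le_right (by omega)
        exact hne (q1.symm.trans q2)
      have hd : finrank K ↥(S ⊔ S') = t + 2 := by omega
      have hset : ((C3 f T m₁).toFinset.filter (fun F => S ≤ F ∧ S' ≤ F)) =
          (C3 f (S ⊔ S') m₁).toFinset := by
        ext F
        simp only [Finset.mem_filter, Set.mem_toFinset]
        exact ⟨fun h => ⟨h.1.1, sup_le h.2.1 h.2.2⟩, fun h => ⟨⟨h.1, h1.trans (le_sup_left.trans h.2)⟩,
          le_sup_left.trans h.2, le_sup_right.trans h.2⟩⟩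
      rw [hset, ← Set.ncard_eq_toFinset_card', hN2]
      have hle : S ⊔ S' ≤ M := sup_le h2 h2'
      split_ifs with hm
      · have : C3 f (S ⊔ S') m₁ = ∅ := by
          ext F
          simp only [Set.mem_empty_iff_false, iff_false]
          intro hF
          have := Submodule.finrank_mono hF.2
          rw [hd, hF.1.2] at this
          omega
        rw [this]
        simp
      · exact hcount m₁ hm₁ν.le (t + 2) _ (by omega)
          ⟨fun x hx y hy => hM.1 x (hle hx) y (hle hy), hd⟩)
  rw [← Set.ncard_eq_toFinset_card'] at hbonf
  set g : ℚ := (PS.ncard : ℚ) with hg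
  have hC1 : (((C3 f T m₁).toFinset.filter (fun F => ∃ S ∈ PS.toFinset, S ≤ F)).card : ℚ) ≤
      ((C1 f M T m₁ t).ncard : ℚ) := by
    rw [Set.ncard_eq_toFinset_card']
    norm_cast
    apply Finset.card_le_card
    intro F hF
    simp only [Finset.mem_filter, Set.mem_toFinset] at hF ⊢
    obtain ⟨hF1, S, ⟨_, hS2, hS3⟩, hSF⟩ := hF
    exact ⟨hF1.1, hF1.2, hS3 ▸ Submodule.finrank_mono (le_inf hSF hS2)⟩
  have hgb : gaussBinom q (m₂ - t + 1) 1 = g := by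
    have e : m₂ + 1 - t = m₂ - t + 1 := by omega
    rw [e] at hpts
    have hne : (q : ℚ) - 1 ≠ 0 := by linarith
    simp only [gaussBinom, Finset.prod_range_one]
    have e3 : (q : ℚ) ^ (((m₂ - t + 1 : ℕ) : ℤ) - ((0 : ℕ) : ℤ)) = (q : ℚ) ^ (m₂ - t + 1) := by
      rw [Nat.cast_zero, sub_zero, zpow_natCast]
    rw [e3, ← hpts]
    simp [hne]
  have hN1pos : 0 < Nprime q (t + 1) m₁ ν := aux_Nprime_pos _ _ _ _ hq1 hm₁ν.le
  have hNtpos : 0 < Nprime q t m₂ ν := aux_Nprime_pos _ _ _ _ hq1 hm₂ν.le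
  have hmain : (q : ℚ) ^ 2 * (g * (g - 1)) * N2 < 2 * Nprime q (t + 1) m₁ ν := by
    rw [hN2]
    split_ifs with hm
    · simpa using hN1pos
    · have hstep := aux_Nprime_step q (t + 1) m₁ ν (by omega)
      have hpos : (q : ℚ) ^ (m₁ - (t + 1)) - 1 ≠ 0 := by
        have := one_lt_pow₀ hq1' (by omega : m₁ - (t + 1) ≠ 0)
        linarith
      refine aux_ineq q g _ _ (m₂ + 1 - t) (m₁ - (t + 1)) (2 * (ν - (t + 1))) hq2'
        (aux_Nprime_pos _ _ _ _ hq1 hm₁ν.le) (by omega) (by omega) hpts (by omega) ?_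
      rw [hstep, mul_assoc, div_mul_cancel₀ _ hpos]
      congr 2
      rw [← zpow_natCast]
      congr 1
      have : t + 1 ≤ ν := by omega
      push_cast [this]
      ring
  have hfin : (g - (q : ℚ) ^ (-2 : ℤ)) * Nprime q (t + 1) m₁ ν < ((C1 f M T m₁ t).ncard : ℚ) := by
    refine lt_of_lt_of_le ?_ (hbonf.trans hC1)
    have hqq : (q : ℚ) ^ (-2 : ℤ) = ((q : ℚ) ^ 2)⁻¹ := by
      rw [zpow_neg]; norm_cast
    rw [hqq]
    have hq2pos : (0 : ℚ) < (q : ℚ) ^ 2 := by positivity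
    have hlt : g * (g - 1) * N2 < ((q : ℚ) ^ 2)⁻¹ * (2 * Nprime q (t + 1) m₁ ν) := by
      rw [lt_inv_mul_iff₀ hq2pos]
      linarith
    linarith
  rw [hgb]
  calc _ < ((C1 f M T m₁ t).ncard : ℚ) * Nprime q t m₂ ν := mul_lt_mul_of_pos_right hfin hNtpos
    _ ≤ _ := mul_le_mul_of_nonneg_left hC2 (by positivity)


end
end

section
/- Let q be a prime power and let ν, m₁, m₂, t be positive integers with m₁ ≥ m₂ ≥ t+1 and 2ν ≥ 2m₁ + m₂ + t + 2. If m₂ ≤ 2t and (m₁,m₂,t) ∉ {(2,2,1), (3,2,1)}, then c₁(ν,m₁,m₂,t) < c₂(ν,m₁,m₂,t). -/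
open Finset Module

noncomputable section

variable {K V : Type*} [Field K] [AddCommGroup V] [Module K V]

lemma dc_le {α β : Type*} [Finite α] [Finite β] (s : Set α) (t : Set β) (r : α → β → Prop)
    (m n : ℤ) (hm : ∀ a ∈ s, m ≤ ({b | b ∈ t ∧ r a b}.ncard : ℤ))
    (hn : ∀ b ∈ t, ({a | a ∈ s ∧ r a b}.ncard : ℤ) ≤ n) :
    (s.ncard : ℤ) * m ≤ (t.ncard : ℤ) * n := by
  classical
  have := Fintype.ofFinite α
  have := Fintype.ofFinite β
  have h := Finset.card_nsmul_le_card_nsmul (s := s.toFinset) (t := t.toFinset) (m := m) (n := n) r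
    (by
      intro a ha
      have := hm a (by simpa using ha)
      rw [Set.ncard_eq_toFinset_card'] at this
      have e : bipartiteAbove r t.toFinset a = {b | b ∈ t ∧ r a b}.toFinset := by
        ext b; simp [Finset.bipartiteAbove]
      rw [e]; exact this)
    (by
      intro b hb
      have := hn b (by simpa using hb)
      rw [Set.ncard_eq_toFinset_card'] at this
      have e : bipartiteBelow r s.toFinset b = {a | a ∈ s ∧ r a b}.toFinset := by
        ext b; simp [Finset.bipartiteBelow]
      rw [e]; exact this)
  simpa [Set.ncard_eq_toFinset_card'] using h

lemma dc_eq {α β : Type*} [Finite α] [Finite β] (s : Set α) (t : Set β) (r : α → β → Prop)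
    (m n : ℤ) (hm : ∀ a ∈ s, ({b | b ∈ t ∧ r a b}.ncard : ℤ) = m)
    (hn : ∀ b ∈ t, ({a | a ∈ s ∧ r a b}.ncard : ℤ) = n) :
    (s.ncard : ℤ) * m = (t.ncard : ℤ) * n :=
  le_antisymm (dc_le s t r m n (fun a ha => (hm a ha).ge) (fun b hb => (hn b hb).le))
    (dc_le t s (fun b a => r a b) n m (fun b hb => (hn b hb).ge) (fun a ha => (hm a ha).le))

section helpers

lemma ncard_sub {K V : Type*} [Field K] [AddCommGroup V] [Module K V] [Fintype K] [Finite V]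
    (A : Submodule K V) :
    ((A : Set V).ncard : ℤ) = (Fintype.card K : ℤ) ^ finrank K A := by
  have := Fintype.ofFinite V
  have := Fintype.ofFinite A
  have := Module.card_eq_pow_finrank (K := K) (V := A)
  rw [← Nat.card_coe_set_eq]
  rw [← Nat.card_eq_fintype_card] at this
  exact_mod_cast this

lemma ncard_sdiff {K V : Type*} [Field K] [AddCommGroup V] [Module K V] [Fintype K] [Finite V]
    (A B : Submodule K V) (h : A ≤ B) :
    (((B : Set V) \ A).ncard : ℤ) = (Fintype.card K : ℤ) ^ finrank K B
      - (Fintype.card K : ℤ) ^ finrank K A := by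
  have h1 := Set.ncard_sdiff_add_ncard_of_subset (s := (A : Set V)) (t := (B : Set V)) h
  have h2 := ncard_sub A
  have h3 := ncard_sub B
  rw [← h2, ← h3, ← h1]; push_cast; ring

variable {K V : Type*} [Field K] [AddCommGroup V] [Module K V] [Fintype K] [Finite V]
  [FiniteDimensional K V]

abbrev perp (f : V →ₗ[K] V →ₗ[K] K) (A : Submodule K V) : Submodule K V :=
  LinearMap.BilinForm.orthogonal f A


lemma skew (f : V →ₗ[K] V →ₗ[K] K) (halt : ∀ v, f v v = 0) (x y : V) : f x y = - f y x := by
  have h := halt (x + y)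
  simp only [map_add, LinearMap.add_apply, halt, zero_add, add_zero] at h
  exact eq_neg_of_add_eq_zero_right h

lemma finrank_perp (f : V →ₗ[K] V →ₗ[K] K) (halt : ∀ v, f v v = 0)
    (hnd : ∀ v, (∀ w, f v w = 0) → v = 0) (A : Submodule K V) :
    finrank K (perp f A) = finrank K V - finrank K A := by
  apply LinearMap.BilinForm.finrank_orthogonal
  refine ⟨hnd, fun y h => hnd y fun w => ?_⟩
  rw [skew f halt, h w, neg_zero]

lemma iso_le {f : V →ₗ[K] V →ₗ[K] K} {A B : Submodule K V} (h : A ≤ B)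
    (hB : TotallyIsotropic f B) : TotallyIsotropic f A :=
  fun x hx y hy => hB x (h hx) y (h hy)

lemma le_perp {f : V →ₗ[K] V →ₗ[K] K} {A B : Submodule K V} (h : A ≤ B)
    (hB : TotallyIsotropic f B) : B ≤ perp f A :=
  fun x hx y hy => hB y (h hy) x hx

lemma iso_sup (f : V →ₗ[K] V →ₗ[K] K) (halt : ∀ v, f v v = 0) {A : Submodule K V}
    (hA : TotallyIsotropic f A) {x : V} (hx : x ∈ perp f A) :
    TotallyIsotropic f (A ⊔ Submodule.span K {x}) := by
  intro u hu v hv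
  obtain ⟨a, ha, b, hb, rfl⟩ := Submodule.mem_sup.1 hu
  obtain ⟨c, hc, d, hd, rfl⟩ := Submodule.mem_sup.1 hv
  obtain ⟨β, rfl⟩ := Submodule.mem_span_singleton.1 hb
  obtain ⟨δ, rfl⟩ := Submodule.mem_span_singleton.1 hd
  have h1 : f a x = 0 := hx a ha
  have h2 : f x c = 0 := by rw [skew f halt, show f c x = 0 from hx c hc, neg_zero]
  simp [hA a ha c hc, h1, h2, halt]

lemma sup_le_iff' {A F : Submodule K V} {x : V} :
    A ⊔ Submodule.span K {x} ≤ F ↔ A ≤ F ∧ x ∈ F := by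
  rw [sup_le_iff, Submodule.span_singleton_le_iff_mem]

lemma C3_rec (f : V →ₗ[K] V →ₗ[K] K) (halt : ∀ v, f v v = 0)
    (hnd : ∀ v, (∀ w, f v w = 0) → v = 0) (A : Submodule K V) (hA : TotallyIsotropic f A)
    (m : ℕ) (c : ℕ)
    (hc : ∀ B, TotallyIsotropic f B → finrank K B = finrank K A + 1 → (C3 f B m).ncard = c) :
    ((C3 f A m).ncard : ℤ) * ((Fintype.card K : ℤ) ^ m - (Fintype.card K : ℤ) ^ finrank K A)
    = ((Fintype.card K : ℤ) ^ (finrank K V - finrank K A)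
        - (Fintype.card K : ℤ) ^ finrank K A) * c := by
  rw [← finrank_perp f halt hnd A, ← ncard_sdiff A (perp f A) (le_perp le_rfl hA)]
  apply dc_eq _ _ (fun F x => x ∈ F)
  · rintro F ⟨⟨hF, hFm⟩, hAF⟩
    rw [← hFm, ← ncard_sdiff A F hAF]
    congr 2
    ext x
    have := @le_perp _ _ _ _ _ _ _ _ f A F hAF hF x
    simp only [Set.mem_sdiff, SetLike.mem_coe, Set.mem_ofPred_eq]
    tauto
  · rintro x ⟨hx, hxA⟩
    rw [← hc (A ⊔ Submodule.span K {x}) (iso_sup f halt hA hx)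
      (Submodule.finrank_sup_span_singleton hxA)]
    congr 2
    ext F
    simp only [C3, Set.mem_ofPred_eq, sup_le_iff']
    tauto

lemma C3_const (f : V →ₗ[K] V →ₗ[K] K) (halt : ∀ v, f v v = 0)
    (hnd : ∀ v, (∀ w, f v w = 0) → v = 0) (m : ℕ) : ∃ N : ℕ → ℕ,
    ∀ A, TotallyIsotropic f A → (C3 f A m).ncard = N (finrank K A) := by
  have hq : 1 < Fintype.card K := Fintype.one_lt_card
  have key : ∀ k, ∃ c : ℕ, ∀ A, TotallyIsotropic f A → finrank K A + k = m →
      (C3 f A m).ncard = c := by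
    intro k
    induction k with
    | zero =>
      refine ⟨1, fun A hA h => ?_⟩
      rw [Set.ncard_eq_one]
      refine ⟨A, ?_⟩
      ext F
      simp only [C3, polar, Set.mem_ofPred_eq, Set.mem_singleton_iff]
      constructor
      · rintro ⟨⟨_, h2⟩, h3⟩
        exact (Submodule.eq_of_le_of_finrank_eq h3 (by omega)).symm
      · rintro rfl
        exact ⟨⟨hA, by omega⟩, le_rfl⟩
    | succ k ih =>
      obtain ⟨c, hc⟩ := ih
      by_cases hex : ∃ A, TotallyIsotropic f A ∧ finrank K A + (k + 1) = m
      · obtain ⟨A, hA, hAm⟩ := hex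
        refine ⟨(C3 f A m).ncard, fun B hB hBm => ?_⟩
        have h1 := C3_rec f halt hnd A hA m c (fun D hD hd => hc D hD (by omega))
        have h2 := C3_rec f halt hnd B hB m c (fun D hD hd => hc D hD (by omega))
        have e : finrank K B = finrank K A := by omega
        rw [e, ← h1] at h2
        have : (Fintype.card K : ℤ) ^ finrank K A < (Fintype.card K : ℤ) ^ m :=
          pow_lt_pow_right₀ (by exact_mod_cast hq) (by omega)
        have := mul_right_cancel₀ (by linarith) h2
        exact_mod_cast this
      · exact ⟨0, fun A hA h => (hex ⟨A, hA, h⟩).elim⟩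
  choose c hc using key
  refine ⟨fun a => if a ≤ m then c (m - a) else 0, fun A hA => ?_⟩
  dsimp only
  split_ifs with h
  · exact hc _ A hA (by omega)
  · rw [Set.ncard_eq_zero]
    ext F
    simp only [C3, polar, Set.mem_ofPred_eq, Set.mem_empty_iff_false, iff_false]
    rintro ⟨⟨_, h2⟩, h3⟩
    have := Submodule.finrank_mono h3
    omega

lemma C3_pos (f : V →ₗ[K] V →ₗ[K] K) (halt : ∀ v, f v v = 0)
    (hnd : ∀ v, (∀ w, f v w = 0) → v = 0) (m : ℕ) (hm : 2 * m ≤ finrank K V) (k : ℕ) :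
    ∀ A, TotallyIsotropic f A → finrank K A + k = m → (C3 f A m).Nonempty := by
  induction k with
  | zero => intro A hA h; exact ⟨A, ⟨hA, h⟩, le_rfl⟩
  | succ k ih =>
    intro A hA h
    have : ¬ perp f A ≤ A := fun hle => by
      have := Submodule.finrank_mono hle
      rw [finrank_perp f halt hnd] at this
      omega
    obtain ⟨x, hx, hxA⟩ := SetLike.not_le_iff_exists.1 this
    obtain ⟨F, hF, hle⟩ := ih _ (iso_sup f halt hA hx)
      (by rw [Submodule.finrank_sup_span_singleton hxA]; omega)
    exact ⟨F, hF, le_sup_left.trans hle⟩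

lemma C1_bound (f : V →ₗ[K] V →ₗ[K] K) (m : ℕ) (N : ℕ → ℕ)
    (hN : ∀ A, TotallyIsotropic f A → (C3 f A m).ncard = N (finrank K A))
    (M T : Submodule K V) (hM : TotallyIsotropic f M) (hTM : T ≤ M) (t : ℕ)
    (hT : finrank K T = t) (hlt : t < finrank K M) :
    (((C1 f M T m t).ncard : ℤ) - N (t + 1)) *
      ((Fintype.card K : ℤ) ^ (t + 1) - (Fintype.card K : ℤ) ^ t) ≤
    ((Fintype.card K : ℤ) ^ finrank K M - (Fintype.card K : ℤ) ^ (t + 1)) *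
      ((N (t + 1) : ℤ) - N (t + 2)) := by
  have hq : 1 < Fintype.card K := Fintype.one_lt_card
  have : ¬ M ≤ T := fun hle => by
    have := Submodule.finrank_mono hle
    omega
  obtain ⟨x0, hx0, hx0T⟩ := SetLike.not_le_iff_exists.1 this
  set P := T ⊔ Submodule.span K {x0} with hP
  have hPM : P ≤ M := sup_le_iff'.2 ⟨hTM, hx0⟩
  have hPf : finrank K P = t + 1 := by rw [hP, Submodule.finrank_sup_span_singleton hx0T, hT]
  have hTP : T ≤ P := le_sup_left
  set R : Set (Submodule K V) := {F | F ∈ C1 f M T m t ∧ ¬ P ≤ F} with hR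
  have hsub : C1 f M T m t ⊆ C3 f P m ∪ R := by
    intro F hF
    by_cases h : P ≤ F
    · exact Or.inl ⟨hF.1, h⟩
    · exact Or.inr ⟨hF, h⟩
  have hcard : (C1 f M T m t).ncard ≤ N (t + 1) + R.ncard := by
    calc _ ≤ _ := Set.ncard_le_ncard hsub
      _ ≤ _ := Set.ncard_union_le _ _
      _ = _ := by rw [hN P (iso_le hPM hM), hPf]
  have hmain : (R.ncard : ℤ) *
      ((Fintype.card K : ℤ) ^ (t + 1) - (Fintype.card K : ℤ) ^ t) ≤
      ((Fintype.card K : ℤ) ^ finrank K M - (Fintype.card K : ℤ) ^ (t + 1)) *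
      ((N (t + 1) : ℤ) - N (t + 2)) := by
    rw [← hPf, ← ncard_sdiff P M hPM]
    apply dc_le _ _ (fun F x => x ∈ F)
    · rintro F ⟨⟨hF, hTF, hFM⟩, hPF⟩
      have hsub : ((F ⊓ M : Submodule K V) : Set V) \ T ⊆
          {b | b ∈ (M : Set V) \ P ∧ b ∈ F} := by
        rintro x ⟨hx, hxT⟩
        refine ⟨⟨hx.2, fun hxP => hPF ?_⟩, hx.1⟩
        have : T ⊔ Submodule.span K {x} = P :=
          Submodule.eq_of_le_of_finrank_eq (sup_le_iff'.2 ⟨hTP, hxP⟩)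
            (by rw [Submodule.finrank_sup_span_singleton hxT, hPf, hT])
        rw [← this]
        exact sup_le_iff'.2 ⟨hTF, hx.1⟩
      have h1 := Set.ncard_le_ncard hsub
      have h2 := ncard_sdiff T (F ⊓ M) (le_inf hTF hTM)
      have h3 : (Fintype.card K : ℤ) ^ (t + 1) ≤ (Fintype.card K : ℤ) ^ finrank K ↥(F ⊓ M) :=
        pow_le_pow_right₀ (by exact_mod_cast hq.le) hFM
      rw [hT] at h2
      rw [hPf]
      have h1' : ((((F ⊓ M : Submodule K V) : Set V) \ T).ncard : ℤ) ≤ _ := Nat.cast_le.2 h1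
      linarith
    · rintro x ⟨hxM, hxP⟩
      have hxT : x ∉ T := fun h => hxP (hTP h)
      have e1 := hN (T ⊔ Submodule.span K {x}) (iso_le (sup_le_iff'.2 ⟨hTM, hxM⟩) hM)
      have e2 := hN (P ⊔ Submodule.span K {x}) (iso_le (sup_le_iff'.2 ⟨hPM, hxM⟩) hM)
      rw [Submodule.finrank_sup_span_singleton hxT, hT] at e1
      rw [Submodule.finrank_sup_span_singleton hxP, hPf] at e2
      have hs : C3 f (P ⊔ Submodule.span K {x}) m ⊆ C3 f (T ⊔ Submodule.span K {x}) m :=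
        fun F hF => ⟨hF.1, (sup_le_sup_right hTP _).trans hF.2⟩
      have h1 := Set.ncard_sdiff_add_ncard_of_subset hs
      have hs2 : {F | F ∈ R ∧ x ∈ F} ⊆ C3 f (T ⊔ Submodule.span K {x}) m \
          C3 f (P ⊔ Submodule.span K {x}) m := by
        rintro F ⟨⟨⟨hF, hTF, _⟩, hPF⟩, hx⟩
        exact ⟨⟨hF, sup_le_iff'.2 ⟨hTF, hx⟩⟩, fun h => hPF (sup_le_iff'.1 h.2).1⟩
      have h2 := Set.ncard_le_ncard hs2
      rw [e1, e2] at h1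
      rw [hPf]
      have h2' : (({F | F ∈ R ∧ x ∈ F}).ncard : ℤ) ≤ _ := Nat.cast_le.2 h2
      have h1' := congrArg (Nat.cast : ℕ → ℤ) h1
      push_cast at h1'
      have : t + 1 + 1 = t + 2 := rfl
      rw [this] at h1'
      linarith
  refine le_trans (mul_le_mul_of_nonneg_right ?_ ?_) hmain
  · have : ((C1 f M T m t).ncard : ℤ) ≤ _ := Nat.cast_le.2 hcard
    push_cast at this
    linarith
  · have : (Fintype.card K : ℤ) ^ t ≤ (Fintype.card K : ℤ) ^ (t + 1) :=
      pow_le_pow_right₀ (by exact_mod_cast hq.le) (by omega)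
    linarith

/-- intersection of `A` with the perp of one vector -/
lemma finrank_cut (f : V →ₗ[K] V →ₗ[K] K) (halt : ∀ v, f v v = 0) (A : Submodule K V) (x : V)
    (hx : x ∉ perp f A) :
    finrank K ↥(A ⊓ LinearMap.ker (f x)) + 1 = finrank K A := by
  have hsurj : LinearMap.range ((f x).domRestrict A) = ⊤ := by
    have h : (f x).domRestrict A ≠ 0 := by
      intro h
      apply hx
      intro a ha
      have h1 : f x a = 0 := by simpa using LinearMap.congr_fun h ⟨a, ha⟩
      change f a x = 0
      rw [skew f halt, h1, neg_zero]
    exact LinearMap.range_eq_top.2 (LinearMap.surjective h)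
  have h := LinearMap.finrank_range_add_finrank_ker ((f x).domRestrict A)
  rw [hsurj, finrank_top, Module.finrank_self] at h
  have e : LinearMap.ker ((f x).domRestrict A) = (LinearMap.ker (f x)).comap A.subtype := rfl
  rw [e] at h
  rw [← Submodule.map_comap_subtype, Submodule.finrank_map_subtype_eq]
  omega

lemma perp_anti (f : V →ₗ[K] V →ₗ[K] K) {A B : Submodule K V} (h : A ≤ B) :
    perp f B ≤ perp f A := fun _ hx a ha => hx a (h ha)

lemma le_ker (f : V →ₗ[K] V →ₗ[K] K) (halt : ∀ v, f v v = 0) {A : Submodule K V} {x : V} :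
    A ≤ LinearMap.ker (f x) ↔ x ∈ perp f A := by
  constructor
  · intro h a ha
    have : f x a = 0 := h ha
    change f a x = 0
    rw [skew f halt, this, neg_zero]
  · intro h a ha
    have : f a x = 0 := h a ha
    rw [LinearMap.mem_ker, skew f halt, this, neg_zero]

lemma hyp_bound (f : V →ₗ[K] V →ₗ[K] K) (halt : ∀ v, f v v = 0)
    (hnd : ∀ v, (∀ w, f v w = 0) → v = 0) (m : ℕ) (M : Submodule K V)
    (hM : finrank K M = m + 1) :
    (({F | F ∈ polar f m ∧ F ≤ M}.ncard : ℕ) : ℤ) *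
      ((Fintype.card K : ℤ) ^ (finrank K V - m) - (Fintype.card K : ℤ) ^ (finrank K V - (m + 1))) ≤
    (Fintype.card K : ℤ) ^ finrank K V - (Fintype.card K : ℤ) ^ (finrank K V - (m + 1)) := by
  have h := dc_le {F | F ∈ polar f m ∧ F ≤ M} (((⊤ : Submodule K V) : Set V) \ perp f M)
    (fun F x => x ∈ perp f F)
    ((Fintype.card K : ℤ) ^ (finrank K V - m) - (Fintype.card K : ℤ) ^ (finrank K V - (m + 1))) 1
    (by
      rintro F ⟨⟨_, hF⟩, hFM⟩
      rw [← hM, ← hF, ← finrank_perp f halt hnd, ← finrank_perp f halt hnd,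
        ← ncard_sdiff _ _ (perp_anti f hFM)]
      apply Nat.cast_le.2
      refine Set.ncard_le_ncard ?_
      rintro x ⟨h1, h2⟩
      exact ⟨⟨trivial, h2⟩, h1⟩)
    (by
      rintro x ⟨_, hx⟩
      have : {F | F ∈ {F | F ∈ polar f m ∧ F ≤ M} ∧ x ∈ perp f F} ⊆
          {M ⊓ LinearMap.ker (f x)} := by
        rintro F ⟨⟨⟨_, hF⟩, hFM⟩, hxF⟩
        have := finrank_cut f halt M x hx
        exact Submodule.eq_of_le_of_finrank_eq (le_inf hFM ((le_ker f halt).2 hxF)) (by omega)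
      have := Set.ncard_le_ncard this
      rw [Set.ncard_singleton] at this
      exact_mod_cast this)
  rw [mul_one, ncard_sdiff _ _ le_top, finrank_perp f halt hnd, finrank_top, hM] at h
  exact h

lemma C4_bound (f : V →ₗ[K] V →ₗ[K] K) (halt : ∀ v, f v v = 0)
    (hnd : ∀ v, (∀ w, f v w = 0) → v = 0) (m t : ℕ) (N : ℕ → ℕ)
    (hN : ∀ A, TotallyIsotropic f A → (C3 f A m).ncard = N (finrank K A))
    (S : Submodule K V) (hS : TotallyIsotropic f S) (hSt : finrank K S = t + 1) :
    ((Fintype.card K : ℤ) ^ finrank K V - (Fintype.card K : ℤ) ^ (finrank K V - (t + 1))) *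
      ((N t : ℤ) - N (t + 1)) ≤
    (((C4 f S m t).ncard : ℤ) - N (t + 1)) *
      ((Fintype.card K : ℤ) ^ (finrank K V - t) -
        (Fintype.card K : ℤ) ^ (finrank K V - (t + 1))) := by
  set R : Set (Submodule K V) := {F | F ∈ C4 f S m t ∧ ¬ S ≤ F} with hR
  have hRe : R = C4 f S m t \ C3 f S m := by
    ext F
    constructor
    · rintro ⟨h1, h2⟩; exact ⟨h1, fun h => h2 h.2⟩
    · rintro ⟨h1, h2⟩; exact ⟨h1, fun h => h2 ⟨h1.1, h⟩⟩
  have hs : C3 f S m ⊆ C4 f S m t := by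
    rintro F ⟨hF, hle⟩
    refine ⟨hF, ?_⟩
    rw [inf_eq_right.2 hle]
    omega
  have h1 := Set.ncard_sdiff_add_ncard_of_subset hs
  rw [← hRe, hN S hS, hSt] at h1
  have h := dc_le (((⊤ : Submodule K V) : Set V) \ perp f S) R
    (fun x F => F ⊓ S = S ⊓ LinearMap.ker (f x)) ((N t : ℤ) - N (t + 1))
    ((Fintype.card K : ℤ) ^ (finrank K V - t) - (Fintype.card K : ℤ) ^ (finrank K V - (t + 1)))
    (by
      rintro x ⟨_, hx⟩
      have hc := finrank_cut f halt S x hx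
      have hle : S ⊓ LinearMap.ker (f x) ≤ S := inf_le_left
      have e := hN _ (iso_le hle hS)
      rw [show finrank K ↥(S ⊓ LinearMap.ker (f x)) = t by omega] at e
      have e2 := hN S hS
      rw [hSt] at e2
      have hs : C3 f S m ⊆ C3 f (S ⊓ LinearMap.ker (f x)) m :=
        fun F hF => ⟨hF.1, hle.trans hF.2⟩
      have h3 := Set.ncard_sdiff_add_ncard_of_subset hs
      have hs2 : C3 f (S ⊓ LinearMap.ker (f x)) m \ C3 f S m ⊆
          {F | F ∈ R ∧ F ⊓ S = S ⊓ LinearMap.ker (f x)} := by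
        rintro F ⟨⟨hF, hF1⟩, hF2⟩
        have hSF : ¬ S ≤ F := fun h => hF2 ⟨hF, h⟩
        have hle2 : S ⊓ LinearMap.ker (f x) ≤ F ⊓ S := le_inf hF1 hle
        have h5 := Submodule.finrank_mono hle2
        have hlt : F ⊓ S < S := lt_of_le_of_ne inf_le_right (fun h => hSF (inf_eq_right.1 h))
        have h6 := Submodule.finrank_lt_finrank_of_lt hlt
        refine ⟨⟨⟨hF, by omega⟩, hSF⟩, ?_⟩
        exact (Submodule.eq_of_le_of_finrank_eq hle2 (by omega)).symm
      have h4 := Set.ncard_le_ncard hs2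
      rw [e, e2] at h3
      have h4' : ((C3 f (S ⊓ LinearMap.ker (f x)) m \ C3 f S m).ncard : ℤ) ≤ _ :=
        Nat.cast_le.2 h4
      have h3' := congrArg (Nat.cast : ℕ → ℤ) h3
      push_cast at h3'
      linarith)
    (by
      rintro F ⟨⟨hF, hFt⟩, hSF⟩
      have hlt : F ⊓ S < S := lt_of_le_of_ne inf_le_right (fun h => hSF (inf_eq_right.1 h))
      have h6 := Submodule.finrank_lt_finrank_of_lt hlt
      have h7 : finrank K ↥(F ⊓ S) = t := by omega
      rw [← hSt]
      rw [show finrank K V - t = finrank K V - finrank K ↥(F ⊓ S) by rw [h7]]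
      rw [← finrank_perp f halt hnd, ← finrank_perp f halt hnd,
        ← ncard_sdiff _ _ (perp_anti f inf_le_right)]
      apply Nat.cast_le.2
      refine Set.ncard_le_ncard ?_
      rintro x ⟨⟨_, hx⟩, he⟩
      refine ⟨?_, hx⟩
      apply (le_ker f halt).1
      rw [he]
      exact inf_le_right)
  rw [ncard_sdiff _ _ le_top, finrank_perp f halt hnd, finrank_top, hSt] at h
  have h1' := congrArg (Nat.cast : ℕ → ℤ) h1
  push_cast at h1'
  have e : ((C4 f S m t).ncard : ℤ) - N (t + 1) = R.ncard := by linarith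
  rw [e]
  exact h

end helpers

lemma pow_cancel_eq {q X Y : ℤ} (hq : 2 ≤ q) {a u v : ℕ} (b c : ℕ) (hu : u = a + b)
    (hv : v = a + c)
    (h : X * (q ^ u - q ^ a) = (q ^ v - q ^ a) * Y) : X * (q ^ b - 1) = (q ^ c - 1) * Y := by
  subst hu hv
  have hp : (0 : ℤ) < q ^ a := by positivity
  apply mul_left_cancel₀ hp.ne'
  rw [pow_add, pow_add] at h
  linear_combination h

lemma pow_cancel_le {q X Y : ℤ} (hq : 2 ≤ q) {a u v w : ℕ} (b c d : ℕ) (hu : u = a + b)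
    (hv : v = a + c) (hw : w = a + d)
    (h : X * (q ^ u - q ^ a) ≤ (q ^ v - q ^ w) * Y) : X * (q ^ b - 1) ≤ (q ^ c - q ^ d) * Y := by
  subst hu hv hw
  have hp : (0 : ℤ) < q ^ a := by positivity
  apply le_of_mul_le_mul_left _ hp
  rw [pow_add, pow_add, pow_add] at h
  linarith

lemma ratio_ge {q X Y : ℤ} (hq : 2 ≤ q) (hY : 0 ≤ Y) {b c : ℕ} (d : ℕ) (hb : 1 ≤ b)
    (hc : b + d ≤ c)
    (h : X * (q ^ b - 1) = (q ^ c - 1) * Y) : q ^ d * Y ≤ X := by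
  have h1 : (1 : ℤ) < q ^ b := one_lt_pow₀ (by linarith) (by omega)
  have h2 : q ^ b * q ^ d ≤ q ^ c := by
    rw [← pow_add]; exact pow_le_pow_right₀ (by linarith) hc
  have h3 : (1 : ℤ) ≤ q ^ d := one_le_pow₀ (by linarith)
  have h4 : (q ^ d * (q ^ b - 1)) * Y ≤ (q ^ c - 1) * Y :=
    mul_le_mul_of_nonneg_right (by linarith) hY
  rw [← h] at h4
  apply le_of_mul_le_mul_right _ (show (0 : ℤ) < q ^ b - 1 by linarith)
  linarith

lemma arithA (q Q N0 N' N1 D c1 c2 c4 : ℤ) (hq : 2 ≤ q) (hQ : 2 ≤ Q)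
    (hN' : 1 ≤ N') (hN1 : 1 ≤ N1) (hc20 : 0 ≤ c2)
    (hc1 : c1 * (q - 1) ≤ (Q - 1) * N1) (hc2 : c2 ≤ N0 + D) (hD : D ≤ Q ^ 2)
    (hc4 : (q * Q - 1) * (N0 - N') ≤ (c4 - N') * (q - 1))
    (hN0 : Q ^ 2 * q ^ 4 * N' ≤ N0) : c1 * c2 < N1 * c4 := by
  have hq1 : 0 < q - 1 := by linarith
  have k1 : Q * N0 ≤ Q * (q - 1) * N0 := by
    have : 0 ≤ N0 := le_trans (by positivity) hN0
    have : 0 ≤ Q * N0 := by positivity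
    nlinarith
  have k2 : Q ^ 3 * q ^ 4 * N' ≤ Q * N0 := by nlinarith
  have k3 : (Q - 1) * D ≤ Q ^ 3 := by
    have : (Q - 1) * D ≤ (Q - 1) * Q ^ 2 := mul_le_mul_of_nonneg_left hD (by linarith)
    nlinarith [sq_nonneg Q]
  have k4 : Q ^ 3 * q ^ 3 * N' * 2 ≤ Q ^ 3 * q ^ 4 * N' := by
    have : 0 < Q ^ 3 * q ^ 3 * N' := by positivity
    nlinarith
  have k5 : Q ^ 3 ≤ Q ^ 3 * q ^ 3 * N' := by
    have h1 : (1 : ℤ) ≤ q ^ 3 := one_le_pow₀ (by linarith)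
    have h2 : 1 ≤ q ^ 3 * N' := by nlinarith
    have : 0 < Q ^ 3 := by positivity
    nlinarith
  have k6 : q * Q * N' ≤ Q ^ 3 * q ^ 3 * N' := by
    have h1 : q * Q ≤ (q * Q) ^ 3 := le_self_pow₀ (by nlinarith) (by norm_num)
    have := mul_le_mul_of_nonneg_right h1 (show 0 ≤ N' by linarith)
    linarith [mul_pow q Q 3, this, show (q * Q) ^ 3 * N' = Q ^ 3 * q ^ 3 * N' by ring]
  have k7 : 0 < q * N' := by positivity
  have key : (Q - 1) * (N0 + D) < (q * Q - 1) * (N0 - N') + N' * (q - 1) := by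
    linarith
  have s1 : c1 * (q - 1) * c2 ≤ (Q - 1) * N1 * c2 := mul_le_mul_of_nonneg_right hc1 hc20
  have s2 : (Q - 1) * N1 * c2 ≤ (Q - 1) * N1 * (N0 + D) :=
    mul_le_mul_of_nonneg_left hc2 (mul_nonneg (by linarith) (by linarith))
  have s3 : (Q - 1) * (N0 + D) < c4 * (q - 1) := by linarith
  have s4 : N1 * ((Q - 1) * (N0 + D)) < N1 * (c4 * (q - 1)) :=
    mul_lt_mul_of_pos_left s3 (by linarith)
  apply lt_of_mul_lt_mul_right _ hq1.le
  linarith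

lemma arithB (q Q P G N0 N' N1 N2 D c1 c2 c4 : ℤ) (hq : 2 ≤ q) (hQ : 2 ≤ Q) (hP : 2 ≤ P)
    (hG : 1 ≤ G)
    (hN' : 1 ≤ N') (hN1 : 1 ≤ N1) (hN2 : 1 ≤ N2) (hc20 : 0 ≤ c2) (hD0 : 0 ≤ D)
    (hc1 : c1 * (q - 1) ≤ (q * Q - 1) * N1 - (q * Q - q) * N2) (hc2 : c2 ≤ N0 + D)
    (hc10 : 0 ≤ c1)
    (hc4 : (q * Q - 1) * (N0 - N') ≤ (c4 - N') * (q - 1))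
    (r1 : N1 * (P - 1) = G * N2) (r0 : N0 * (Q - 1) = (q ^ 2 * (G + 1) - 1) * N')
    (hkey : (q * Q - 1) * D ≤ N' * (q ^ 3 * (P - 1) - q * Q + q)) : c1 * c2 < N1 * c4 := by
  have hq1 : 0 < q - 1 := by linarith
  have hP1 : 0 < P - 1 := by linarith
  have key : N1 * ((q * Q - 1) * D + (q * Q - q) * N') < (q * Q - q) * N2 * (N0 + D) := by
    apply lt_of_mul_lt_mul_right _ hP1.le
    have e1 : N1 * ((q * Q - 1) * D + (q * Q - q) * N') * (P - 1)
        = G * N2 * ((q * Q - 1) * D + (q * Q - q) * N') := by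
      linear_combination ((q * Q - 1) * D + (q * Q - q) * N') * r1
    have e2 : (q * Q - q) * N2 * (N0 + D) * (P - 1) =
        N2 * (P - 1) * q * ((q ^ 2 * (G + 1) - 1) * N') + (q * (Q - 1)) * N2 * D * (P - 1) := by
      linear_combination N2 * (P - 1) * q * r0
    rw [e1, e2]
    have p1 : 0 ≤ (q * (Q - 1)) * N2 * D * (P - 1) := by
      have : 0 ≤ Q - 1 := by linarith
      positivity
    have p2 : G * N2 * ((q * Q - 1) * D + (q * Q - q) * N') ≤ G * N2 * (N' * (q ^ 3 * (P - 1))) :=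
      mul_le_mul_of_nonneg_left (by linarith) (by positivity)
    have p3 : 0 < N2 * (P - 1) * q * ((q ^ 2 - 1) * N') := by
      have : 0 < q ^ 2 - 1 := by nlinarith
      positivity
    linarith
  have s1 : c1 * (q - 1) * c2 ≤ c1 * (q - 1) * (N0 + D) :=
    mul_le_mul_of_nonneg_left hc2 (mul_nonneg hc10 hq1.le)
  have s2 : c1 * (q - 1) * (N0 + D) ≤ ((q * Q - 1) * N1 - (q * Q - q) * N2) * (N0 + D) :=
    mul_le_mul_of_nonneg_right hc1 (by linarith)
  have s4 : N1 * ((q * Q - 1) * (N0 - N')) ≤ N1 * ((c4 - N') * (q - 1)) :=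
    mul_le_mul_of_nonneg_left hc4 (by linarith)
  apply lt_of_mul_lt_mul_right _ hq1.le
  linarith

lemma key1 (q P N' D : ℤ) (hq : 2 ≤ q) (hP : q ^ 2 ≤ P) (hN' : 1 ≤ N')
    (hD : D * (q - 1) ≤ q ^ 3 - 1) :
    (q * q - 1) * D ≤ N' * (q ^ 3 * (P - 1) - q * q + q) := by
  have h1 : (q + 1) * (D * (q - 1)) ≤ (q + 1) * (q ^ 3 - 1) :=
    mul_le_mul_of_nonneg_left hD (by linarith)
  have h2 : q ^ 3 * (q ^ 2 - 1) ≤ q ^ 3 * (P - 1) :=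
    mul_le_mul_of_nonneg_left (by linarith) (by positivity)
  have h3 : (q + 1) * (q ^ 3 - 1) ≤ q ^ 3 * (q ^ 2 - 1) - q * q + q := by
    obtain ⟨k, hk, rfl⟩ : ∃ k : ℤ, 0 ≤ k ∧ q = k + 2 := ⟨q - 2, by linarith, by ring⟩
    ring_nf
    nlinarith [pow_nonneg hk 2, pow_nonneg hk 3, pow_nonneg hk 4, pow_nonneg hk 5]
  have h4 : 0 ≤ (q + 1) * (q ^ 3 - 1) := by
    have : (1 : ℤ) ≤ q ^ 3 := one_le_pow₀ (by linarith)
    apply mul_nonneg <;> linarith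
  have h5 : 0 ≤ q ^ 3 * (P - 1) - q * q + q := by linarith
  nlinarith

lemma key2 (q Q P N' D : ℤ) (hq : 2 ≤ q) (hQ : q ^ 2 ≤ Q) (hP : Q ≤ q * P)
    (hN' : q ^ 2 * Q ^ 3 ≤ N') (hD : D ≤ q * Q ^ 2) :
    (q * Q - 1) * D ≤ N' * (q ^ 3 * (P - 1) - q * Q + q) := by
  have hQ0 : 0 < Q := lt_of_lt_of_le (by positivity) hQ
  have h1 : q ^ 2 * Q ≤ q ^ 2 * (q * P) := mul_le_mul_of_nonneg_left hP (by positivity)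
  have h2 : 2 * (q * Q) ≤ q * (q * Q) := mul_le_mul_of_nonneg_right hq (by positivity)
  have h3 : q * q ^ 2 ≤ q * Q := mul_le_mul_of_nonneg_left hQ (by positivity)
  have h4 : 1 ≤ q ^ 3 * (P - 1) - q * Q + q := by linarith
  have h5 : 0 ≤ N' := le_trans (by positivity) hN'
  have h6 : N' * 1 ≤ N' * (q ^ 3 * (P - 1) - q * Q + q) := mul_le_mul_of_nonneg_left h4 h5
  have h7 : 0 ≤ q * Q - 1 := by nlinarith
  have h8 : (q * Q - 1) * D ≤ (q * Q - 1) * (q * Q ^ 2) := mul_le_mul_of_nonneg_left hD h7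
  have h9 : 0 ≤ q * Q ^ 2 := by positivity
  nlinarith

theorem stmt_16
    (q ν m₁ m₂ t : ℕ) (hq : IsPrimePow q)
    {K : Type} [Field K] [Fintype K] (hK : Fintype.card K = q)
    (f : (Fin (2 * ν) → K) →ₗ[K] (Fin (2 * ν) → K) →ₗ[K] K)
    (halt : ∀ v, f v v = 0)
    (hnd : ∀ v, (∀ w, f v w = 0) → v = 0)
    (hν : 0 < ν) (ht : 0 < t) (hm : m₂ ≤ m₁) (hmt : t + 1 ≤ m₂)
    (hdim : 2 * m₁ + m₂ + t + 2 ≤ 2 * ν)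
    (hcase : m₂ ≤ 2 * t ∧ (m₁, m₂, t) ≠ (2, 2, 1) ∧ (m₁, m₂, t) ≠ (3, 2, 1))
    (M : Submodule K (Fin (2 * ν) → K)) (hM : M ∈ polar f (m₂ + 1))
    (T : Submodule K (Fin (2 * ν) → K)) (hTM : T ≤ M) (hT : finrank K T = t)
    (S : Submodule K (Fin (2 * ν) → K)) (hS : S ∈ polar f (t + 1)) :
    (C1 f M T m₁ t).ncard * (C2 f M T m₂).ncard <
      (C3 f S m₁).ncard * (C4 f S m₂ t).ncard := by
  have _ := hq
  have _ := hν
  obtain ⟨hm2t, hne1, hne2⟩ := hcase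
  have hV : finrank K (Fin (2 * ν) → K) = 2 * ν := by simp
  obtain ⟨N, hN⟩ := C3_const f halt hnd m₂
  obtain ⟨N₁, hN₁⟩ := C3_const f halt hnd m₁
  have hTi : TotallyIsotropic f T := iso_le hTM hM.1
  have hq2 : (2 : ℤ) ≤ (q : ℤ) := by
    have : 1 < Fintype.card K := Fintype.one_lt_card
    rw [hK] at this; exact_mod_cast this
  have hc3 := hN₁ S hS.1
  rw [hS.2] at hc3
  have posN' : 0 < N (t + 1) := by
    rw [← hS.2, ← hN S hS.1]
    exact (C3_pos f halt hnd m₂ (by omega) (m₂ - (t + 1)) S hS.1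
      (by have := hS.2; omega)).ncard_pos
  have posN1 : 0 < N₁ (t + 1) := by
    rw [← hS.2, ← hN₁ S hS.1]
    exact (C3_pos f halt hnd m₁ (by omega) (m₁ - (t + 1)) S hS.1
      (by have := hS.2; omega)).ncard_pos
  have rT := C3_rec f halt hnd T hTi m₂ (N (t + 1)) (fun B hB h => by rw [hN B hB, h, hT])
  have rS := C3_rec f halt hnd S hS.1 m₂ (N (t + 2)) (fun B hB h => by rw [hN B hB, h, hS.2])
  have rS1 := C3_rec f halt hnd S hS.1 m₁ (N₁ (t + 2)) (fun B hB h => by rw [hN₁ B hB, h, hS.2])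
  rw [hN T hTi, hT, hV, hK] at rT
  rw [hN S hS.1, hS.2, hV, hK] at rS
  rw [hc3, hS.2, hV, hK] at rS1
  replace rT := pow_cancel_eq hq2 (m₂ - t) (2 * ν - 2 * t) (by omega) (by omega) rT
  replace rS := pow_cancel_eq hq2 (m₂ - t - 1) (2 * ν - 2 * t - 2) (by omega) (by omega) rS
  replace rS1 := pow_cancel_eq hq2 (m₁ - t - 1) (2 * ν - 2 * t - 2) (by omega) (by omega) rS1
  have b1 := C1_bound f m₁ N₁ hN₁ M T hM.1 hTM t hT (by rw [hM.2]; omega)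
  rw [hM.2, hK] at b1
  replace b1 := pow_cancel_le hq2 1 (m₂ + 1 - t) 1 (by omega) (by omega) (by omega) b1
  have bD := hyp_bound f halt hnd m₂ M hM.2
  set D := {F | F ∈ polar f m₂ ∧ F ≤ M}.ncard with hDdef
  rw [hV, hK, ← mul_one ((q : ℤ) ^ (2 * ν) - _)] at bD
  replace bD := pow_cancel_le hq2 1 (m₂ + 1) 0 (by omega) (by omega) (by omega) bD
  have b4 := C4_bound f halt hnd m₂ t N hN S hS.1 hS.2
  rw [hV, hK] at b4
  replace b4 : ((q : ℤ) * q ^ t - 1) * ((N t : ℤ) - N (t + 1)) ≤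
      (((C4 f S m₂ t).ncard : ℤ) - N (t + 1)) * ((q : ℤ) - 1) := by
    have hp : (0 : ℤ) < (q : ℤ) ^ (2 * ν - (t + 1)) := by positivity
    apply le_of_mul_le_mul_left _ hp
    rw [show 2 * ν - t = 2 * ν - (t + 1) + 1 by omega] at b4
    rw [show (q : ℤ) ^ (2 * ν) = (q : ℤ) ^ (2 * ν - (t + 1)) * (q * q ^ t) by
      rw [← pow_succ', ← pow_add]; congr 1; omega, pow_succ] at b4
    linarith
  have b2 : ((C2 f M T m₂).ncard : ℤ) ≤ N t + D := by
    have h := Set.ncard_union_le {F | F ∈ polar f m₂ ∧ T ≤ F} {F | F ∈ polar f m₂ ∧ F ≤ M}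
    have e := hN T hTi
    rw [hT] at e
    unfold C3 at e
    rw [e] at h
    unfold C2
    exact_mod_cast h
  have bD1 : (D : ℤ) ≤ (q : ℤ) ^ (m₂ + 1) := by
    have : (D : ℤ) * 1 ≤ D * ((q : ℤ) ^ 1 - 1) :=
      mul_le_mul_of_nonneg_left (by rw [pow_one]; linarith) (by positivity)
    have h1 : (q : ℤ) ^ 0 = 1 := pow_zero _
    linarith
  have hQ : (2 : ℤ) ≤ (q : ℤ) ^ t := hq2.trans (le_self_pow₀ (by linarith) (by omega))
  have hq1 : (1 : ℤ) ≤ q := by linarith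
  rw [hc3]
  zify
  simp only [pow_one, pow_zero] at b1 bD
  by_cases hlt : m₂ + 1 ≤ 2 * t
  · refine arithA q ((q : ℤ) ^ t) (N t) (N (t + 1)) (N₁ (t + 1)) D _ _ _ hq2 hQ
      (by exact_mod_cast posN') (by exact_mod_cast posN1) (by positivity) ?_ b2 ?_ b4 ?_
    · have h1 : (q : ℤ) ^ (m₂ + 1 - t) ≤ (q : ℤ) ^ t := pow_le_pow_right₀ hq1 (by omega)
      have h2 : (q : ℤ) ≤ (q : ℤ) ^ (m₂ + 1 - t) := le_self_pow₀ hq1 (by omega)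
      have h3 : ((q : ℤ) ^ (m₂ + 1 - t) - q) * ((N₁ (t + 1) : ℤ) - N₁ (t + 2)) ≤
          ((q : ℤ) ^ (m₂ + 1 - t) - q) * (N₁ (t + 1) : ℤ) :=
        mul_le_mul_of_nonneg_left (by linarith [Int.natCast_nonneg (N₁ (t + 2))]) (by linarith)
      have h4 : ((q : ℤ) ^ (m₂ + 1 - t) - q) * (N₁ (t + 1) : ℤ) ≤
          ((q : ℤ) ^ t - q) * (N₁ (t + 1) : ℤ) :=
        mul_le_mul_of_nonneg_right (by linarith) (by positivity)
      linarith
    · rw [← pow_mul]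
      exact bD1.trans (pow_le_pow_right₀ hq1 (by omega))
    · rw [← pow_mul, ← pow_add]
      exact ratio_ge hq2 (by positivity) _ (by omega) (by omega) rT
  · have hm2 : m₂ = 2 * t := by omega
    have hm1 : t + 2 ≤ m₁ := by
      by_contra hcon
      have : t = 1 := by omega
      subst this
      apply hne1
      have h1 : m₁ = 2 := by omega
      rw [h1, hm2]
    have hP : (2 : ℤ) ≤ (q : ℤ) ^ (m₁ - t - 1) := hq2.trans (le_self_pow₀ hq1 (by omega))
    have hG : (2 : ℤ) ≤ (q : ℤ) ^ (2 * ν - 2 * t - 2) := hq2.trans (le_self_pow₀ hq1 (by omega))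
    have posN2 : 0 < N₁ (t + 2) := by
      rcases Nat.eq_zero_or_pos (N₁ (t + 2)) with h | h
      · rw [h, Nat.cast_zero, mul_zero] at rS1
        have h1 : (0 : ℤ) < N₁ (t + 1) := by exact_mod_cast posN1
        have : (0 : ℤ) < (N₁ (t + 1) : ℤ) * ((q : ℤ) ^ (m₁ - t - 1) - 1) :=
          mul_pos h1 (by linarith)
        omega
      · exact h
    refine arithB q ((q : ℤ) ^ t) ((q : ℤ) ^ (m₁ - t - 1)) ((q : ℤ) ^ (2 * ν - 2 * t - 2) - 1)
      (N t) (N (t + 1)) (N₁ (t + 1)) (N₁ (t + 2)) D _ _ _ hq2 hQ hP (by linarith)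
      (by exact_mod_cast posN') (by exact_mod_cast posN1) (by exact_mod_cast posN2)
      (by positivity) (by positivity) ?_ b2 (by positivity) b4 rS1 ?_ ?_
    · rw [show m₂ + 1 - t = t + 1 by omega, pow_succ'] at b1
      linarith
    · rw [show m₂ - t = t by omega, show 2 * ν - 2 * t = 2 + (2 * ν - 2 * t - 2) by omega,
        pow_add] at rT
      rw [rT]
      ring
    · by_cases ht1 : t = 1
      · subst ht1
        have hm14 : 4 ≤ m₁ := by
          by_contra hcon
          apply hne2
          have h1 : m₁ = 3 := by omega
          rw [h1, hm2]
        rw [pow_one]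
        apply key1 q _ _ _ hq2 (pow_le_pow_right₀ hq1 (by omega)) (by exact_mod_cast posN')
        clear_value D
        rw [show m₂ + 1 = 3 by omega] at bD
        linarith
      · refine key2 q _ _ _ _ hq2 (pow_le_pow_right₀ hq1 (by omega)) ?_ ?_ ?_
        · rw [← pow_succ']
          exact pow_le_pow_right₀ hq1 (by omega)
        · have posN'' : 0 < N (t + 2) := by
            rcases Nat.eq_zero_or_pos (N (t + 2)) with h | h
            · rw [h, Nat.cast_zero, mul_zero] at rS
              have h1 : (0 : ℤ) < N (t + 1) := by exact_mod_cast posN'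
              have h2 : (2 : ℤ) ≤ (q : ℤ) ^ (m₂ - t - 1) :=
                hq2.trans (le_self_pow₀ hq1 (by omega))
              have : (0 : ℤ) < (N (t + 1) : ℤ) * ((q : ℤ) ^ (m₂ - t - 1) - 1) :=
                mul_pos h1 (by linarith)
              omega
            · exact h
          have h1 := ratio_ge hq2 (by positivity) (2 + t * 3) (by omega) (by omega) rS
          rw [← pow_mul, ← pow_add]
          refine le_trans ?_ h1
          have h3 : (1 : ℤ) ≤ N (t + 2) := by exact_mod_cast posN''
          exact le_mul_of_one_le_right (by positivity) h3
        · rw [← pow_mul, ← pow_succ']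
          exact bD1.trans (pow_le_pow_right₀ hq1 (by omega))

end
end
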